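/- arXiv:1903.03747 — 3 statements merged into one kernel-verified Lean document; each statement's English description precedes it below -/
import Mathlib

section
/- Weight-5 triple sum formula: 2 T(1,1,3) + 2 T(1,2,2) + T(2,1,2) = (2/3) T(2) T(3). -/
/-- The multiple T-value `T(k₁, …, k_r)`:
`2^r` times the sum over `0 < m₁ < ⋯ < m_r` with `m_i ≡ i (mod 2)`
of `1 / (m₁^{k₁} ⋯ m_r^{k_r})`. -/
noncomputable def MTV (k : List ℕ) : ℝ :=
  2 ^ k.length *
    ∑' f : {f : Fin k.length → ℕ // StrictMono f ∧ ∀ i, f i % 2 = ((i : ℕ) + 1) % 2},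
      ∏ i : Fin k.length, (1 : ℝ) / (f.1 i : ℝ) ^ k.get i

/-!
A multiple T-value is an iterated integral of the forms `dt / t` and `2 dt / (1 - t ^ 2)`, and the
involution `t ↦ (1 - t) / (1 + t)` exchanges the two forms up to sign. Duality follows by the
method of connected sums: the integral `C(m, n)` of `((1 - t) / (1 + t)) ^ n d(t ^ m)` is symmetric,
and the operator of one form in the variable `m` acts on it as the operator of the other form in
`n`. Moving a word letter by letter from `m` to `n` reverses it and swaps its letters, so that
`T(1,1,3) = T(1,4)`, `T(1,2,2) = T(2,3)` and `T(2,1,2) = T(3,2)`.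

The shuffle product gives `T(2) T(3) = T(3,2) + 3 T(2,3) + 6 T(1,4)`, which reduces the claim to
`T(3,2) = 6 T(1,4)`. That relation is a consequence of the double shuffle relations, the sum formula
and the distribution relation `ζ(2; odd) = 3 ζ(2; even)` for double sums with congruence conditions
modulo `2`.

All sums are taken in `ℝ≥0∞`, where they can be rearranged freely and divergent ones equal `⊤`.
-/

open Set Filter Topology intervalIntegral
open scoped ENNReal NNReal

lemma tsum_ofReal_sub_succ {g : ℕ → ℝ} (hg : Antitone g) (h0 : Tendsto g atTop (𝓝 0)) :
    ∑' k, ENNReal.ofReal (g k - g (k + 1)) = ENNReal.ofReal (g 0) := by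
  have hnonneg (k : ℕ) : 0 ≤ g k - g (k + 1) := sub_nonneg.2 (hg k.le_succ)
  have hsum : HasSum (fun k ↦ g k - g (k + 1)) (g 0) := by
    rw [hasSum_iff_tendsto_nat_of_nonneg hnonneg]
    simpa only [Finset.sum_range_sub', sub_zero] using h0.const_sub (g 0)
  rw [← ENNReal.ofReal_tsum_of_nonneg hnonneg hsum.summable, hsum.tsum_eq]

namespace MTV

/-- The involution `t ↦ (1 - t) / (1 + t)` of `[0, 1]`. It exchanges, up to sign, the forms
`dt / t` and `2 dt / (1 - t ^ 2)` of which multiple T-values are iterated integrals. -/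
noncomputable def cayley (t : ℝ) : ℝ := (1 - t) / (1 + t)

lemma cayley_zero : cayley 0 = 1 := by simp [cayley]

lemma cayley_one : cayley 1 = 0 := by simp [cayley]

lemma cayley_nonneg {t : ℝ} (ht : t ∈ Icc (0 : ℝ) 1) : 0 ≤ cayley t :=
  div_nonneg (sub_nonneg.2 ht.2) (by linarith [ht.1])

lemma cayley_le_one_sub {t : ℝ} (ht : t ∈ Icc (0 : ℝ) 1) : cayley t ≤ 1 - t :=
  div_le_self (sub_nonneg.2 ht.2) (by linarith [ht.1])

lemma cayley_cayley {t : ℝ} (ht : 1 + t ≠ 0) : cayley (cayley t) = t := by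
  unfold cayley
  field_simp
  ring

lemma one_sub_cayley_sq {t : ℝ} (ht : 1 + t ≠ 0) :
    1 - cayley t ^ 2 = 2 * t * (2 / (1 + t) ^ 2) := by
  unfold cayley
  field_simp
  ring

lemma hasDerivAt_cayley {t : ℝ} (ht : 1 + t ≠ 0) :
    HasDerivAt cayley (-(2 / (1 + t) ^ 2)) t := by
  refine (((hasDerivAt_id t).const_sub 1).div ((hasDerivAt_id t).const_add 1) ht).congr_deriv ?_
  simp only [id]
  field_simp
  ring

lemma one_add_ne_zero {t : ℝ} (ht : t ∈ uIcc (0 : ℝ) 1) : 1 + t ≠ 0 := by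
  rw [uIcc_of_le zero_le_one] at ht
  linarith [ht.1]

lemma continuousOn_cayley : ContinuousOn cayley (uIcc 0 1) := fun _ ht ↦
  (hasDerivAt_cayley (one_add_ne_zero ht)).continuousAt.continuousWithinAt

lemma continuousOn_two_div_one_add_sq :
    ContinuousOn (fun t : ℝ ↦ 2 / (1 + t) ^ 2) (uIcc 0 1) :=
  continuousOn_const.div (by fun_prop) fun _ ht ↦ pow_ne_zero 2 (one_add_ne_zero ht)

lemma integral_comp_cayley {f : ℝ → ℝ} (hf : ContinuousOn f (uIcc 0 1)) :
    ∫ t in (0 : ℝ)..1, f (cayley t) * (2 / (1 + t) ^ 2) = ∫ t in (0 : ℝ)..1, f t := by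
  have himage : cayley '' uIcc 0 1 ⊆ uIcc 0 1 := by
    rw [uIcc_of_le zero_le_one]
    rintro _ ⟨t, ht, rfl⟩
    exact ⟨cayley_nonneg ht, (cayley_le_one_sub ht).trans (by linarith [ht.1])⟩
  have hsubst := integral_comp_mul_deriv' (fun t ht ↦ hasDerivAt_cayley (one_add_ne_zero ht))
    continuousOn_two_div_one_add_sq.neg (hf.mono himage)
  rw [cayley_zero, cayley_one, integral_symm 0 1] at hsubst
  simpa only [Function.comp_apply, mul_neg, integral_neg, neg_inj] using hsubst

lemma integral_pow_mul_cayley_pow_succ (m n : ℕ) :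
    ∫ t in (0 : ℝ)..1, (m + 1) * t ^ m * cayley t ^ (n + 1) =
      ∫ t in (0 : ℝ)..1, t ^ (m + 1) * ((n + 1) * cayley t ^ n * (2 / (1 + t) ^ 2)) := by
  have hcayley := continuousOn_cayley
  have hweight := continuousOn_two_div_one_add_sq
  have hparts := integral_mul_deriv_eq_deriv_mul (a := 0) (b := 1)
    (u := fun t : ℝ ↦ t ^ (m + 1)) (u' := fun t ↦ (m + 1) * t ^ m)
    (v := fun t ↦ cayley t ^ (n + 1))
    (v' := fun t ↦ -((n + 1) * cayley t ^ n * (2 / (1 + t) ^ 2)))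
    (fun t _ ↦ by simpa using hasDerivAt_pow (m + 1) t)
    (fun t ht ↦ by
      simpa [mul_assoc] using (hasDerivAt_cayley (one_add_ne_zero ht)).fun_pow (n + 1))
    (ContinuousOn.intervalIntegrable (by fun_prop))
    (ContinuousOn.intervalIntegrable (by fun_prop))
  simp only [mul_neg, integral_neg, cayley_one, zero_pow n.succ_ne_zero,
    zero_pow m.succ_ne_zero, mul_zero, zero_mul, sub_zero, zero_sub, neg_inj] at hparts
  exact hparts.symm

/-- The connector `C(m, n) = ∫₀¹ cayley(t) ^ n d(t ^ m)`; for `m = 0` the measure `d(t ^ m)` is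
the unit mass at `0`, where `cayley = 1`. -/
noncomputable def connector : ℕ → ℕ → ℝ
  | 0, _ => 1
  | m + 1, n => ∫ t in (0 : ℝ)..1, (m + 1) * t ^ m * cayley t ^ n

lemma connector_zero_left (n : ℕ) : connector 0 n = 1 := rfl

lemma connector_succ_zero_right (m : ℕ) : connector (m + 1) 0 = 1 := by
  have hm : (m + 1 : ℝ) ≠ 0 := by positivity
  simp [connector, hm]

lemma connector_comm (m n : ℕ) : connector m n = connector n m := by
  rcases m with - | m <;> rcases n with - | n
  · rfl
  · rw [connector_zero_left, connector_succ_zero_right]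
  · rw [connector_zero_left, connector_succ_zero_right]
  · have hcayley := continuousOn_cayley
    calc
      connector (m + 1) (n + 1)
          = ∫ t in (0 : ℝ)..1, t ^ (m + 1) * ((n + 1) * cayley t ^ n * (2 / (1 + t) ^ 2)) :=
        integral_pow_mul_cayley_pow_succ m n
      _ = ∫ t in (0 : ℝ)..1, (n + 1) * cayley t ^ n * cayley (cayley t) ^ (m + 1) *
            (2 / (1 + t) ^ 2) := by
        refine integral_congr fun t ht ↦ ?_
        simp only [cayley_cayley (one_add_ne_zero ht)]
        ring
      _ = connector (n + 1) (m + 1) :=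
        integral_comp_cayley (f := fun t ↦ (n + 1) * t ^ n * cayley t ^ (m + 1)) (by fun_prop)

lemma connector_zero_right (m : ℕ) : connector m 0 = 1 := by
  rw [connector_comm, connector_zero_left]

lemma connector_nonneg (m n : ℕ) : 0 ≤ connector m n := by
  rcases m with - | m
  · exact zero_le_one
  · refine integral_nonneg zero_le_one fun t ht ↦ ?_
    have := ht.1
    have := cayley_nonneg ht
    positivity

lemma connector_succ_le (m n : ℕ) : connector (m + 1) n ≤ (m + 1) * (1 / (n + 1)) := by
  have hcayley := continuousOn_cayley
  have hbound : ∫ t in (0 : ℝ)..1, (m + 1) * (1 - t) ^ n = (m + 1) * (1 / (n + 1)) := by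
    rw [integral_const_mul, integral_comp_sub_left (fun t : ℝ ↦ t ^ n) 1]
    simp
  rw [← hbound]
  refine integral_mono_on zero_le_one (ContinuousOn.intervalIntegrable (by fun_prop))
    (Continuous.intervalIntegrable (by fun_prop) _ _) fun t ht ↦ ?_
  have hpow : t ^ m ≤ 1 := pow_le_one₀ ht.1 ht.2
  have hnonneg := cayley_nonneg ht
  have hle := cayley_le_one_sub ht
  calc (m + 1) * t ^ m * cayley t ^ n ≤ (m + 1) * 1 * (1 - t) ^ n := by gcongr
    _ = (m + 1) * (1 - t) ^ n := by rw [mul_one]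

lemma tendsto_connector_succ (m : ℕ) : Tendsto (connector (m + 1)) atTop (𝓝 0) := by
  refine squeeze_zero (connector_nonneg _) (connector_succ_le m) ?_
  simpa using (tendsto_one_div_add_atTop_nhds_zero_nat (𝕜 := ℝ)).const_mul (m + 1 : ℝ)

lemma connector_sub_connector_add_two (m n : ℕ) :
    connector m n - connector m (n + 2) = m * (2 / (n + 1) * connector m (n + 1)) := by
  rcases m with - | m
  · simp [connector_zero_left]
  have hcayley := continuousOn_cayley
  have hn : (n + 1 : ℝ) ≠ 0 := by positivity
  calc
    connector (m + 1) n - connector (m + 1) (n + 2)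
        = ∫ t in (0 : ℝ)..1, ((m + 1) * t ^ m * cayley t ^ n -
            (m + 1) * t ^ m * cayley t ^ (n + 2)) :=
      (integral_sub (ContinuousOn.intervalIntegrable (by fun_prop))
        (ContinuousOn.intervalIntegrable (by fun_prop))).symm
    _ = ∫ t in (0 : ℝ)..1, ((m + 1) * (2 / (n + 1))) *
          (t ^ (m + 1) * ((n + 1) * cayley t ^ n * (2 / (1 + t) ^ 2))) := by
      refine integral_congr fun t ht ↦ ?_
      calc
        (m + 1) * t ^ m * cayley t ^ n - (m + 1) * t ^ m * cayley t ^ (n + 2)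
            = (m + 1) * t ^ m * cayley t ^ n * (1 - cayley t ^ 2) := by ring
        _ = _ := by
          rw [one_sub_cayley_sq (one_add_ne_zero ht)]
          field_simp
          ring
    _ = (m + 1 : ℕ) * (2 / (n + 1) * connector (m + 1) (n + 1)) := by
      rw [integral_const_mul, ← integral_pow_mul_cayley_pow_succ, connector]
      push_cast
      ring

/-- The operator on weights that dualizes integration against `dt / t` of power series: the
coefficient of `t ^ n` is divided by `n`. -/
noncomputable def divIndex (h : ℕ → ℝ≥0∞) (n : ℕ) : ℝ≥0∞ := (n : ℝ≥0∞)⁻¹ * h n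

/-- The operator on weights that dualizes integration against `2 dt / (1 - t ^ 2)` of power
series: `t ^ n` is sent to the sum of `2 t ^ p / p` over `p > n` with `p - n` odd. -/
noncomputable def oddGapSum (h : ℕ → ℝ≥0∞) (n : ℕ) : ℝ≥0∞ :=
  ∑' k : ℕ, 2 * ((n + 2 * k + 1 : ℕ) : ℝ≥0∞)⁻¹ * h (n + 2 * k + 1)

lemma oddGapSum_one (n : ℕ) : oddGapSum (fun _ ↦ 1) n = ⊤ := by
  by_contra hfinite
  have hsum : Summable fun k : ℕ ↦ 2 * ((n + 2 * k + 1 : ℕ) : ℝ)⁻¹ := by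
    simpa only [mul_one, ENNReal.toReal_mul, ENNReal.toReal_ofNat, ENNReal.toReal_inv,
      ENNReal.toReal_natCast] using ENNReal.summable_toReal hfinite
  refine (summable_nat_add_iff 1).not.2 Real.not_summable_natCast_inv ?_
  refine (hsum.mul_left (n + 2 : ℝ)).of_nonneg_of_le (fun _ ↦ by positivity) fun k ↦ ?_
  rw [← mul_assoc, ← div_eq_mul_inv, inv_eq_one_div,
    div_le_div_iff₀ (by positivity) (by positivity)]
  push_cast
  have hnk : (0 : ℝ) ≤ n * k := by positivity
  linarith

lemma oddGapSum_connector (m n : ℕ) :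
    oddGapSum (fun p ↦ ENNReal.ofReal (connector m p)) n =
      (m : ℝ≥0∞)⁻¹ * ENNReal.ofReal (connector m n) := by
  rcases m with - | m
  -- Both sides are `⊤`: on the right, `0⁻¹ = ⊤` in `ℝ≥0∞`.
  · simp [connector_zero_left, oddGapSum_one]
  have hm : (0 : ℝ) < (m + 1 : ℕ) := by positivity
  let g (k : ℕ) : ℝ := connector (m + 1) (n + 2 * k) / (m + 1 : ℕ)
  have hstep (k : ℕ) :
      g k - g (k + 1) = 2 * ((n + 2 * k + 1 : ℕ) : ℝ)⁻¹ * connector (m + 1) (n + 2 * k + 1) := by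
    simp only [g]
    rw [← sub_div, mul_add_one, ← add_assoc, connector_sub_connector_add_two,
      mul_div_cancel_left₀ _ hm.ne']
    push_cast
    ring
  have hanti : Antitone g := antitone_nat_of_succ_le fun k ↦ by
    have := connector_nonneg (m + 1) (n + 2 * k + 1)
    rw [← sub_nonneg, hstep]
    positivity
  have hlim : Tendsto g atTop (𝓝 0) := by
    have hindex : Tendsto (fun k : ℕ ↦ n + 2 * k) atTop atTop :=
      tendsto_atTop_mono (fun k ↦ show k ≤ n + 2 * k by lia) tendsto_id
    have := ((tendsto_connector_succ m).comp hindex).div_const ((m + 1 : ℕ) : ℝ)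
    rwa [zero_div] at this
  calc
    oddGapSum (fun p ↦ ENNReal.ofReal (connector (m + 1) p)) n
        = ∑' k, ENNReal.ofReal (g k - g (k + 1)) := by
      refine tsum_congr fun k ↦ ?_
      rw [hstep, ENNReal.ofReal_mul (by positivity), ENNReal.ofReal_mul zero_le_two,
        ENNReal.ofReal_inv_of_pos (by positivity), ENNReal.ofReal_natCast, ENNReal.ofReal_ofNat]
    _ = ENNReal.ofReal (g 0) := tsum_ofReal_sub_succ hanti hlim
    _ = ((m + 1 : ℕ) : ℝ≥0∞)⁻¹ * ENNReal.ofReal (connector (m + 1) n) := by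
      simp only [g, mul_zero, add_zero]
      rw [ENNReal.ofReal_div_of_pos hm, ENNReal.ofReal_natCast,
        div_eq_mul_inv, mul_comm]

/-- The operator attached to a letter: `false` stands for the form `dt / t` and `true` for
`2 dt / (1 - t ^ 2)`. -/
noncomputable def letterOp : Bool → (ℕ → ℝ≥0∞) → ℕ → ℝ≥0∞
  | false => divIndex
  | true => oddGapSum

/-- The operator attached to a word of forms, the first letter being applied last. -/
noncomputable def wordOp (w : List Bool) (h : ℕ → ℝ≥0∞) : ℕ → ℝ≥0∞ := w.foldr letterOp h

lemma wordOp_append (v w : List Bool) (h : ℕ → ℝ≥0∞) :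
    wordOp (v ++ w) h = wordOp v (wordOp w h) :=
  List.foldr_append

lemma letterOp_comm (a b : Bool) (F : ℕ → ℕ → ℝ≥0∞) (m n : ℕ) :
    letterOp a (fun p ↦ letterOp b (F p) n) m =
      letterOp b (fun q ↦ letterOp a (fun p ↦ F p q) m) n := by
  cases a <;> cases b <;>
    simp only [letterOp, divIndex, oddGapSum, ← ENNReal.tsum_mul_left]
  · ring
  · exact tsum_congr fun _ ↦ by ring
  · exact tsum_congr fun _ ↦ by ring
  · rw [ENNReal.tsum_comm]
    exact tsum_congr fun _ ↦ tsum_congr fun _ ↦ by ring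

lemma wordOp_letterOp_comm (w : List Bool) (b : Bool) (F : ℕ → ℕ → ℝ≥0∞) (m n : ℕ) :
    wordOp w (fun p ↦ letterOp b (F p) n) m =
      letterOp b (fun q ↦ wordOp w (fun p ↦ F p q) m) n := by
  induction w generalizing m with
  | nil => rfl
  | cons a w ih =>
    simp only [wordOp, List.foldr_cons] at ih ⊢
    rw [funext ih, letterOp_comm]

lemma letterOp_connector (b : Bool) (m n : ℕ) :
    letterOp b (fun p ↦ ENNReal.ofReal (connector p n)) m =
      letterOp (!b) (fun q ↦ ENNReal.ofReal (connector m q)) n := by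
  cases b
  · exact (oddGapSum_connector m n).symm
  · simp only [letterOp, Bool.not_true, connector_comm _ n, divIndex]
    exact oddGapSum_connector n m

lemma wordOp_connector (w : List Bool) (m n : ℕ) :
    wordOp w (fun p ↦ ENNReal.ofReal (connector p n)) m =
      wordOp (w.map not).reverse (fun q ↦ ENNReal.ofReal (connector m q)) n := by
  induction w using List.reverseRecOn generalizing n with
  | nil => rfl
  | append_singleton w b ih =>
    calc
      wordOp (w ++ [b]) (fun p ↦ ENNReal.ofReal (connector p n)) m
          = wordOp w (fun p ↦ letterOp (!b) (fun q ↦ ENNReal.ofReal (connector p q)) n) m := by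
        rw [wordOp_append]
        exact congrArg (wordOp w · m) (funext fun p ↦ letterOp_connector b p n)
      _ = letterOp (!b) (fun q ↦ wordOp w (fun p ↦ ENNReal.ofReal (connector p q)) m) n :=
        wordOp_letterOp_comm w (!b) _ m n
      _ = letterOp (!b)
            (wordOp (w.map not).reverse fun q ↦ ENNReal.ofReal (connector m q)) n := by
        rw [funext ih]
      _ = wordOp ((w ++ [b]).map not).reverse (fun q ↦ ENNReal.ofReal (connector m q)) n := by
        rw [List.map_append, List.reverse_append]
        rfl

theorem wordOp_dual (w : List Bool) :
    wordOp (w.map not).reverse (fun _ ↦ 1) 0 = wordOp w (fun _ ↦ 1) 0 := by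
  simpa [connector_zero_left, connector_zero_right] using (wordOp_connector w 0 0).symm

/-- The word of an index: an entry `a` contributes `2 dt / (1 - t ^ 2)` followed by `a - 1` copies
of `dt / t`. -/
def indexWord (k : List ℕ) : List Bool :=
  k.flatMap fun a ↦ true :: List.replicate (a - 1) false

lemma wordOp_replicate_false (a : ℕ) (h : ℕ → ℝ≥0∞) (n : ℕ) :
    wordOp (List.replicate a false) h n = (n : ℝ≥0∞)⁻¹ ^ a * h n := by
  induction a with
  | zero => simp [wordOp]
  | succ a ih =>
    rw [List.replicate_succ, wordOp, List.foldr_cons, ← wordOp, letterOp, divIndex, ih, pow_succ']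
    ring

lemma wordOp_indexWord_cons {a : ℕ} (ha : 0 < a) (k : List ℕ) (h : ℕ → ℝ≥0∞) (n : ℕ) :
    wordOp (indexWord (a :: k)) h n =
      ∑' j : ℕ, 2 * ((n + 2 * j + 1 : ℕ) : ℝ≥0∞)⁻¹ ^ a *
        wordOp (indexWord k) h (n + 2 * j + 1) := by
  rw [indexWord, List.flatMap_cons, ← indexWord, List.cons_append, wordOp, List.foldr_cons,
    ← wordOp, wordOp_append, letterOp, oddGapSum]
  refine tsum_congr fun j ↦ ?_
  rw [wordOp_replicate_false, ← mul_assoc, mul_assoc 2, mul_pow_sub_one ha.ne']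

/-- The index sequences of the terms of `T(k)` when the strict lower bound `0` and the parity
convention `m_i ≡ i` are replaced by the lower bound `n` and `m_i ≡ n + i`. -/
def alternatingSeq (n r : ℕ) : Set (Fin r → ℕ) :=
  {f | StrictMono f ∧ (∀ i, n < f i) ∧ ∀ i, f i % 2 = (n + i + 1) % 2}

lemma cons_mem_alternatingSeq {n r m : ℕ} {f : Fin r → ℕ} :
    (Fin.cons m f : Fin (r + 1) → ℕ) ∈ alternatingSeq n (r + 1) ↔
      (∃ j, n + 2 * j + 1 = m) ∧ f ∈ alternatingSeq m r := by
  simp only [alternatingSeq, mem_ofPred_eq, Fin.strictMono_cons, Fin.forall_fin_succ, Fin.cons_zero,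
    Fin.cons_succ, Fin.val_zero, Fin.val_succ]
  constructor
  · rintro ⟨⟨hlt, hmono⟩, ⟨hm, -⟩, hm2, hf2⟩
    refine ⟨⟨(m - n - 1) / 2, by lia⟩, hmono, hlt, fun i ↦ ?_⟩
    have := hf2 i
    lia
  · rintro ⟨⟨j, rfl⟩, hmono, hlt, hf2⟩
    refine ⟨⟨hlt, hmono⟩, ⟨by lia, fun i ↦ ?_⟩, by lia, fun i ↦ ?_⟩
    · have := hlt i
      lia
    · have := hf2 i
      lia

lemma tsum_alternatingSeq_succ (n r : ℕ) (F : (Fin (r + 1) → ℕ) → ℝ≥0∞) :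
    ∑' f : alternatingSeq n (r + 1), F f =
      ∑' j : ℕ, ∑' f : alternatingSeq (n + 2 * j + 1) r, F (Fin.cons (n + 2 * j + 1) f) := by
  have hinj : Function.Injective fun j : ℕ ↦ n + 2 * j + 1 := fun i j hij ↦ by
    simp only at hij
    lia
  have hsupp : Function.support (fun m ↦ ∑' f : Fin r → ℕ,
      (alternatingSeq n (r + 1)).indicator F (Fin.cons m f)) ⊆ range fun j ↦ n + 2 * j + 1 := by
    intro m hm
    by_contra hrange
    refine hm (ENNReal.tsum_eq_zero.2 fun f ↦ indicator_of_notMem (fun hf ↦ hrange ?_) F)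
    exact (cons_mem_alternatingSeq.1 hf).1
  calc
    ∑' f : alternatingSeq n (r + 1), F f
        = ∑' m, ∑' f : Fin r → ℕ, (alternatingSeq n (r + 1)).indicator F (Fin.cons m f) := by
      rw [tsum_subtype, ← (Fin.consEquiv fun _ ↦ ℕ).tsum_eq, ENNReal.tsum_prod']
      rfl
    _ = ∑' j : ℕ, ∑' f : Fin r → ℕ,
          (alternatingSeq n (r + 1)).indicator F (Fin.cons (n + 2 * j + 1) f) :=
      (hinj.tsum_eq hsupp).symm
    _ = _ := by
      refine tsum_congr fun j ↦ ?_
      rw [tsum_subtype (alternatingSeq (n + 2 * j + 1) r) fun f ↦ F (Fin.cons (n + 2 * j + 1) f)]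
      refine tsum_congr fun f ↦ ?_
      classical
      simp only [indicator_apply, cons_mem_alternatingSeq, exists_apply_eq_apply, true_and]

lemma wordOp_indexWord {k : List ℕ} (hk : ∀ a ∈ k, 0 < a) (n : ℕ) :
    wordOp (indexWord k) (fun _ ↦ 1) n =
      2 ^ k.length * ∑' f : alternatingSeq n k.length,
        ∏ i, ((f.1 i : ℕ) : ℝ≥0∞)⁻¹ ^ k.get i := by
  induction k generalizing n with
  | nil =>
    have huniv : alternatingSeq n 0 = univ := by
      simp [alternatingSeq, Subsingleton.strictMono]
    simp [huniv, indexWord, wordOp]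
  | cons a k ih =>
    rw [List.forall_mem_cons] at hk
    simp only [wordOp_indexWord_cons hk.1, List.length_cons, ih hk.2]
    rw [tsum_alternatingSeq_succ n k.length fun f ↦ ∏ i, (f i : ℝ≥0∞)⁻¹ ^ (a :: k).get i]
    simp only [Fin.prod_univ_succ, Fin.cons_zero, Fin.cons_succ, List.get_cons_zero,
      List.get_cons_succ', ENNReal.tsum_mul_left]
    rw [← ENNReal.tsum_mul_left]
    refine tsum_congr fun j ↦ ?_
    rw [pow_succ]
    ring

lemma eq_toReal_wordOp {k : List ℕ} (hk : ∀ a ∈ k, 0 < a) :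
    MTV k = (wordOp (indexWord k) (fun _ ↦ 1) 0).toReal := by
  have hiff (f : Fin k.length → ℕ) : f ∈ alternatingSeq 0 k.length ↔
      StrictMono f ∧ ∀ i, f i % 2 = ((i : ℕ) + 1) % 2 := by
    simp only [alternatingSeq, mem_ofPred_eq, zero_add]
    refine ⟨fun ⟨hmono, _, hf2⟩ ↦ ⟨hmono, hf2⟩, fun ⟨hmono, hf2⟩ ↦ ⟨hmono, fun i ↦ ?_, hf2⟩⟩
    have hfirst := hf2 ⟨0, i.pos⟩
    have hle : f ⟨0, i.pos⟩ ≤ f i := hmono.monotone (Nat.zero_le i)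
    simp only at hfirst
    lia
  have hfinite (f : alternatingSeq 0 k.length) :
      ∏ i, ((f.1 i : ℕ) : ℝ≥0∞)⁻¹ ^ k.get i ≠ ⊤ :=
    ENNReal.prod_ne_top fun i _ ↦ ENNReal.pow_ne_top <|
      ENNReal.inv_ne_top.2 <| Nat.cast_ne_zero.2 (f.2.2.1 i).ne'
  rw [wordOp_indexWord hk, ENNReal.toReal_mul, ENNReal.tsum_toReal_eq hfinite, MTV,
    ← (Equiv.subtypeEquivRight hiff).tsum_eq]
  simp [ENNReal.toReal_prod]

theorem eq_of_dual {k l : List ℕ} (hk : ∀ a ∈ k, 0 < a) (hl : ∀ a ∈ l, 0 < a)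
    (hdual : indexWord l = ((indexWord k).map not).reverse) : MTV k = MTV l := by
  rw [eq_toReal_wordOp hk, eq_toReal_wordOp hl, hdual, wordOp_dual]

section Tornheim

lemma tsum_ite_lt (x : ℕ+) (F : ℕ+ → ℝ≥0∞) :
    ∑' y, (if x < y then F y else 0) = ∑' d, F (x + d) := by
  have hsupp : Function.support (fun y ↦ if x < y then F y else 0) ⊆ range (x + ·) := by
    intro y hy
    rw [Function.mem_support, ne_eq, ite_eq_right_iff, Classical.not_imp] at hy
    exact ⟨y - x, PNat.add_sub_of_lt hy.1⟩
  rw [← (add_right_injective x).tsum_eq hsupp]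
  exact tsum_congr fun d ↦ if_pos (PNat.lt_add_right x d)

lemma tsum_tsum_eq_add_add_diagonal (F : ℕ+ → ℕ+ → ℝ≥0∞) :
    ∑' x, ∑' y, F x y =
      ∑' x, ∑' d, F x (x + d) + ∑' y, ∑' d, F (y + d) y + ∑' x, F x x := by
  have htrichotomy (x y : ℕ+) : F x y =
      (if x < y then F x y else 0) + (if y < x then F x y else 0) +
        (if y = x then F x y else 0) := by
    rcases lt_trichotomy x y with h | rfl | h
    · simp [h, h.ne', h.not_gt]
    · simp
    · simp [h, h.ne, h.not_gt]
  have hbelow : ∑' x, ∑' y, (if y < x then F x y else 0) = ∑' y, ∑' d, F (y + d) y := by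
    rw [ENNReal.tsum_comm]
    exact tsum_congr fun y ↦ tsum_ite_lt y (F · y)
  calc
    ∑' x, ∑' y, F x y
        = ∑' x, ∑' y, (if x < y then F x y else 0) + ∑' x, ∑' y, (if y < x then F x y else 0) +
            ∑' x, ∑' y, (if y = x then F x y else 0) := by
      simp only [← ENNReal.tsum_add, ← htrichotomy]
    _ = _ := by simp only [tsum_ite_lt, hbelow, tsum_ite_eq]

lemma tsum_ite_le (n : ℕ+) (f : ℕ → ℝ≥0∞) :
    ∑' j : ℕ+, (if j ≤ n then f j else 0) = ∑ j ∈ Finset.range n, f (j + 1) := by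
  calc
    ∑' j : ℕ+, (if j ≤ n then f j else 0) = ∑' j : ℕ, if j + 1 ≤ n then f (j + 1) else 0 :=
      tsum_pnat_eq_tsum_succ (f := fun j ↦ if j ≤ n then f j else 0)
    _ = ∑ j ∈ Finset.range n, if j + 1 ≤ n then f (j + 1) else 0 :=
      tsum_eq_sum fun j hj ↦ if_neg (by simpa using hj)
    _ = ∑ j ∈ Finset.range n, f (j + 1) :=
      Finset.sum_congr rfl fun j hj ↦ if_pos (Finset.mem_range.1 hj)

lemma tsum_inv_mul_inv_add (n : ℕ+) :
    ∑' m : ℕ+, (m : ℝ≥0∞)⁻¹ * ((m + n : ℕ+) : ℝ≥0∞)⁻¹ =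
      (n : ℝ≥0∞)⁻¹ * ∑' j : ℕ+, if j ≤ n then (j : ℝ≥0∞)⁻¹ else 0 := by
  have hn : (0 : ℝ) < n := by exact_mod_cast n.pos
  let g (m : ℕ) : ℝ := ∑ j ∈ Finset.range n, ((m + j + 1 : ℕ) : ℝ)⁻¹
  have hstep (m : ℕ) : g m - g (m + 1) = n * (((m + 1 : ℕ) : ℝ)⁻¹ * ((m + 1 + n : ℕ) : ℝ)⁻¹) := by
    calc
      g m - g (m + 1) = ((m + 1 : ℕ) : ℝ)⁻¹ - ((m + n + 1 : ℕ) : ℝ)⁻¹ := by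
        simpa only [g, Finset.sum_sub_distrib, add_assoc, add_comm 1, zero_add] using
          Finset.sum_range_sub' (fun j ↦ ((m + j + 1 : ℕ) : ℝ)⁻¹) n
      _ = _ := by
        push_cast
        field_simp
        ring
  have hanti : Antitone g := antitone_nat_of_succ_le fun m ↦ by
    rw [← sub_nonneg, hstep]
    positivity
  have hlim : Tendsto g atTop (𝓝 0) := by
    simpa [g, add_assoc] using tendsto_finsetSum (Finset.range n) fun j _ ↦
      (tendsto_inv_atTop_nhds_zero_nat (𝕜 := ℝ)).comp (tendsto_add_atTop_nat (j + 1))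
  calc
    ∑' m : ℕ+, (m : ℝ≥0∞)⁻¹ * ((m + n : ℕ+) : ℝ≥0∞)⁻¹
        = ∑' m : ℕ, ((m + 1 : ℕ) : ℝ≥0∞)⁻¹ * ((m + 1 + n : ℕ) : ℝ≥0∞)⁻¹ :=
      tsum_pnat_eq_tsum_succ (f := fun m : ℕ ↦ (m : ℝ≥0∞)⁻¹ * ((m + n : ℕ) : ℝ≥0∞)⁻¹)
    _ = ∑' m, (n : ℝ≥0∞)⁻¹ * ENNReal.ofReal (g m - g (m + 1)) := by
      refine tsum_congr fun m ↦ ?_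
      rw [hstep, ENNReal.ofReal_mul hn.le, ENNReal.ofReal_mul (by positivity),
        ENNReal.ofReal_inv_of_pos (by positivity), ENNReal.ofReal_inv_of_pos (by positivity)]
      simp only [ENNReal.ofReal_natCast]
      rw [← mul_assoc, ENNReal.inv_mul_cancel (Nat.cast_ne_zero.2 n.ne_zero)
        (ENNReal.natCast_ne_top n), one_mul]
    _ = _ := by
      rw [ENNReal.tsum_mul_left, tsum_ofReal_sub_succ hanti hlim,
        tsum_ite_le n fun j ↦ (j : ℝ≥0∞)⁻¹, ENNReal.ofReal_sum_of_nonneg fun _ _ ↦ by positivity]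
      simp only [zero_add, ENNReal.ofReal_inv_of_pos (Nat.cast_pos.2 (Nat.succ_pos _)),
        ENNReal.ofReal_natCast]

variable {N : ℕ}

/-- The indicator function of the residue class `a` modulo `N`. -/
noncomputable def residueInd (a : ZMod N) (x : ℕ+) : ℝ≥0∞ :=
  if ((x : ℕ) : ZMod N) = a then 1 else 0

lemma residueInd_mul_residueInd_add (a b : ZMod N) (x y : ℕ+) :
    residueInd a x * residueInd b (x + y) = residueInd a x * residueInd (b - a) y := by
  by_cases hx : ((x : ℕ) : ZMod N) = a
  · simp [residueInd, hx, eq_sub_iff_add_eq, add_comm]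
  · simp [residueInd, hx]

lemma residueInd_mul_residueInd_self (a b : ZMod N) (x : ℕ+) :
    residueInd a x * residueInd b x = if a = b then residueInd a x else 0 := by
  by_cases hx : ((x : ℕ) : ZMod N) = a <;> simp [residueInd, hx]

lemma sum_residueInd [NeZero N] (x : ℕ+) : ∑ a : ZMod N, residueInd a x = 1 := by
  simp [residueInd]

/-- The partial zeta value `∑ 1 / x ^ i` over the positive `x ≡ a` modulo `N`. -/
noncomputable def residueZeta (a : ZMod N) (i : ℕ) : ℝ≥0∞ :=
  ∑' x : ℕ+, residueInd a x * (x : ℝ≥0∞)⁻¹ ^ i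

/-- The Mordell–Tornheim sum `∑ 1 / (x ^ i * y ^ j * (x + y) ^ k)` over the positive `x ≡ a` and
`y ≡ b` modulo `N`. For `j = 0` it is a double zeta value with the congruence conditions put on
the smaller variable and on the gap. -/
noncomputable def tornheim (a b : ZMod N) (i j k : ℕ) : ℝ≥0∞ :=
  ∑' x : ℕ+, ∑' y : ℕ+, residueInd a x * residueInd b y *
    ((x : ℝ≥0∞)⁻¹ ^ i * (y : ℝ≥0∞)⁻¹ ^ j * ((x + y : ℕ+) : ℝ≥0∞)⁻¹ ^ k)

lemma tornheim_comm (a b : ZMod N) (i j k : ℕ) : tornheim a b i j k = tornheim b a j i k := by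
  rw [tornheim, ENNReal.tsum_comm]
  refine tsum_congr fun x ↦ tsum_congr fun y ↦ ?_
  rw [add_comm y x]
  ring

lemma tornheim_zero_right (a b : ZMod N) (i j : ℕ) :
    tornheim a b i j 0 = residueZeta a i * residueZeta b j := by
  simp only [tornheim, residueZeta, ← ENNReal.tsum_mul_left, ← ENNReal.tsum_mul_right]
  rw [ENNReal.tsum_comm]
  exact tsum_congr fun x ↦ tsum_congr fun y ↦ by ring

lemma inv_mul_inv_eq_add (x y : ℕ+) :
    (x : ℝ≥0∞)⁻¹ * (y : ℝ≥0∞)⁻¹ =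
      (y : ℝ≥0∞)⁻¹ * ((x + y : ℕ+) : ℝ≥0∞)⁻¹ + (x : ℝ≥0∞)⁻¹ * ((x + y : ℕ+) : ℝ≥0∞)⁻¹ := by
  have hcancel (z : ℕ+) : (z : ℝ≥0∞) * (z : ℝ≥0∞)⁻¹ = 1 :=
    ENNReal.mul_inv_cancel (Nat.cast_ne_zero.2 z.ne_zero) (ENNReal.natCast_ne_top z)
  calc
    (x : ℝ≥0∞)⁻¹ * (y : ℝ≥0∞)⁻¹
        = (x : ℝ≥0∞)⁻¹ * (y : ℝ≥0∞)⁻¹ * ((x + y : ℕ+) * ((x + y : ℕ+) : ℝ≥0∞)⁻¹) := by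
      rw [hcancel, mul_one]
    _ = x * (x : ℝ≥0∞)⁻¹ * ((y : ℝ≥0∞)⁻¹ * ((x + y : ℕ+) : ℝ≥0∞)⁻¹) +
          y * (y : ℝ≥0∞)⁻¹ * ((x : ℝ≥0∞)⁻¹ * ((x + y : ℕ+) : ℝ≥0∞)⁻¹) := by
      rw [PNat.add_coe, Nat.cast_add]
      ring
    _ = _ := by rw [hcancel, hcancel, one_mul, one_mul]

lemma tornheim_succ_succ (a b : ZMod N) (i j k : ℕ) :
    tornheim a b (i + 1) (j + 1) k =
      tornheim a b i (j + 1) (k + 1) + tornheim a b (i + 1) j (k + 1) := by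
  simp only [tornheim, ← ENNReal.tsum_add]
  refine tsum_congr fun x ↦ tsum_congr fun y ↦ ?_
  calc
    _ = residueInd a x * residueInd b y * ((x : ℝ≥0∞)⁻¹ ^ i * (y : ℝ≥0∞)⁻¹ ^ j *
          ((x + y : ℕ+) : ℝ≥0∞)⁻¹ ^ k) * ((x : ℝ≥0∞)⁻¹ * (y : ℝ≥0∞)⁻¹) := by ring
    _ = _ := by
      rw [inv_mul_inv_eq_add]
      ring

theorem residueZeta_mul_residueZeta (a b : ZMod N) (i j : ℕ) :
    residueZeta a i * residueZeta b j =
      tornheim a (b - a) i 0 j + tornheim b (a - b) j 0 i +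
        if a = b then residueZeta a (i + j) else 0 := by
  rw [← tornheim_zero_right, tornheim, tsum_tsum_eq_add_add_diagonal]
  congr 2
  · refine tsum_congr fun x ↦ tsum_congr fun d ↦ ?_
    rw [residueInd_mul_residueInd_add]
    ring
  · refine tsum_congr fun y ↦ tsum_congr fun d ↦ ?_
    rw [mul_comm (residueInd a _), residueInd_mul_residueInd_add]
    ring
  · simp only [residueInd_mul_residueInd_self]
    split_ifs
    · exact tsum_congr fun x ↦ by ring
    · simp

lemma sum_tornheim [NeZero N] (a : ZMod N) (i j k : ℕ) :
    ∑ b, tornheim a b i j k = ∑' x : ℕ+, ∑' y : ℕ+, residueInd a x *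
      ((x : ℝ≥0∞)⁻¹ ^ i * (y : ℝ≥0∞)⁻¹ ^ j * ((x + y : ℕ+) : ℝ≥0∞)⁻¹ ^ k) := by
  simp only [tornheim, ← Summable.tsum_finsetSum fun _ _ ↦ ENNReal.summable, ← Finset.sum_mul,
    ← Finset.mul_sum, sum_residueInd, mul_one]

theorem sum_tornheim_one_one [NeZero N] (a : ZMod N) (k : ℕ) :
    ∑ b, tornheim a b k 1 1 =
      ∑ b, tornheim b (a - b) 1 0 (k + 1) + residueZeta a (k + 2) := by
  let F (j x : ℕ+) : ℝ≥0∞ :=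
    if j ≤ x then residueInd a x * (x : ℝ≥0∞)⁻¹ ^ (k + 1) * (j : ℝ≥0∞)⁻¹ else 0
  have hinner (x : ℕ+) : ∑' y : ℕ+, residueInd a x *
      ((x : ℝ≥0∞)⁻¹ ^ k * (y : ℝ≥0∞)⁻¹ ^ 1 * ((x + y : ℕ+) : ℝ≥0∞)⁻¹ ^ 1) = ∑' j, F j x := by
    simp only [pow_one, mul_assoc, ENNReal.tsum_mul_left, add_comm x, tsum_inv_mul_inv_add]
    simp only [F, ← ENNReal.tsum_mul_left, mul_ite, mul_zero]
    exact tsum_congr fun j ↦ if_congr Iff.rfl (by ring) rfl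
  have hbelow (j d : ℕ+) : F j (j + d) = ∑ b, residueInd b j * residueInd (a - b) d *
      ((j : ℝ≥0∞)⁻¹ ^ 1 * (d : ℝ≥0∞)⁻¹ ^ 0 * ((j + d : ℕ+) : ℝ≥0∞)⁻¹ ^ (k + 1)) := by
    simp only [F, if_pos (PNat.lt_add_right j d).le, ← residueInd_mul_residueInd_add,
      ← Finset.sum_mul, sum_residueInd]
    ring
  have habove (x d : ℕ+) : F (x + d) x = 0 := if_neg (PNat.lt_add_right x d).not_ge
  have hdiagonal (x : ℕ+) : F x x = residueInd a x * (x : ℝ≥0∞)⁻¹ ^ (k + 2) := by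
    simp only [F, le_refl, if_true]
    ring
  rw [sum_tornheim, tsum_congr hinner, ENNReal.tsum_comm, tsum_tsum_eq_add_add_diagonal]
  simp only [hbelow, habove, hdiagonal, tsum_zero, add_zero, residueZeta, tornheim,
    Summable.tsum_finsetSum fun _ _ ↦ ENNReal.summable]

theorem pow_mul_residueZeta_zero [NeZero N] (k : ℕ) :
    (N : ℝ≥0∞) ^ k * residueZeta (0 : ZMod N) k = ∑ a : ZMod N, residueZeta a k := by
  obtain ⟨c, rfl⟩ : ∃ c : ℕ+, (c : ℕ) = N := ⟨⟨N, NeZero.pos N⟩, rfl⟩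
  have hsupp : Function.support (fun x ↦ residueInd (0 : ZMod c) x * (x : ℝ≥0∞)⁻¹ ^ k) ⊆
      range (c * ·) := by
    intro x hx
    have hdvd : (x : ZMod c) = 0 := by
      by_contra h
      simp [residueInd, h] at hx
    rw [ZMod.natCast_eq_zero_iff] at hdvd
    exact (PNat.dvd_iff.2 hdvd).imp fun _ ↦ Eq.symm
  have hscale (y : ℕ+) : (c : ℝ≥0∞) ^ k * (residueInd (0 : ZMod c) (c * y) *
      ((c * y : ℕ+) : ℝ≥0∞)⁻¹ ^ k) = (y : ℝ≥0∞)⁻¹ ^ k := by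
    have hc : (c : ℝ≥0∞) ≠ 0 := NeZero.ne _
    simp only [residueInd, PNat.mul_coe, Nat.cast_mul, CharP.cast_eq_zero, zero_mul, if_true,
      one_mul]
    rw [ENNReal.mul_inv (.inl hc) (.inl (ENNReal.natCast_ne_top c)), ← mul_pow, ← mul_assoc,
      ENNReal.mul_inv_cancel hc (ENNReal.natCast_ne_top c), one_mul]
  simp only [residueZeta, ← Summable.tsum_finsetSum fun _ _ ↦ ENNReal.summable, ← Finset.sum_mul,
    sum_residueInd, one_mul]
  rw [← (mul_right_injective c).tsum_eq hsupp, ← ENNReal.tsum_mul_left, tsum_congr hscale]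

lemma residueZeta_ne_top (a : ZMod N) {k : ℕ} (hk : 2 ≤ k) : residueZeta a k ≠ ⊤ := by
  have hsum : Summable fun x : ℕ+ ↦ ((x : ℝ) ^ k)⁻¹ :=
    (Real.summable_nat_pow_inv.2 hk).comp_injective PNat.coe_injective
  refine ne_top_of_le_ne_top hsum.tsum_ofReal_ne_top (ENNReal.tsum_le_tsum fun x ↦ ?_)
  have hx : (0 : ℝ) < (x : ℝ) := by exact_mod_cast x.pos
  rw [ENNReal.ofReal_inv_of_pos (by positivity), ENNReal.ofReal_pow hx.le,
    ENNReal.ofReal_natCast, ENNReal.inv_pow]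
  refine mul_le_of_le_one_left' ?_
  rw [residueInd]
  split_ifs <;> simp

lemma tornheim_add_le (a b : ZMod N) (i j p q : ℕ) :
    tornheim a b i j (p + q) ≤ residueZeta a (i + p) * residueZeta b (j + q) := by
  rw [← tornheim_zero_right]
  refine ENNReal.tsum_le_tsum fun x ↦ ENNReal.tsum_le_tsum fun y ↦ ?_
  have hx : ((x + y : ℕ+) : ℝ≥0∞)⁻¹ ≤ (x : ℝ≥0∞)⁻¹ := by
    simp
  have hy : ((x + y : ℕ+) : ℝ≥0∞)⁻¹ ≤ (y : ℝ≥0∞)⁻¹ := by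
    simp
  rw [pow_add, pow_add, pow_add, pow_zero]
  calc
    _ ≤ residueInd a x * residueInd b y * ((x : ℝ≥0∞)⁻¹ ^ i * (y : ℝ≥0∞)⁻¹ ^ j *
          ((x : ℝ≥0∞)⁻¹ ^ p * (y : ℝ≥0∞)⁻¹ ^ q)) := by gcongr
    _ = _ := by ring

lemma tornheim_ne_top (a b : ZMod N) {i k : ℕ} (hk : 2 ≤ k) (hik : 4 ≤ i + k) :
    tornheim a b i 0 k ≠ ⊤ := by
  have hle := tornheim_add_le a b i 0 (2 - i) (k - (2 - i))
  rw [Nat.add_sub_of_le (by lia)] at hle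
  exact ne_top_of_le_ne_top (ENNReal.mul_ne_top (residueZeta_ne_top a (by lia))
    (residueZeta_ne_top b (by lia))) hle

lemma tornheim_zero_left (a b : ZMod N) (j k : ℕ) : tornheim a b 0 j k = tornheim b a j 0 k :=
  tornheim_comm a b 0 j k

lemma residueZeta_two_mul_residueZeta_three (a b : ZMod N) :
    residueZeta a 2 * residueZeta b 3 =
      tornheim b a 3 0 2 + 2 * tornheim b a 2 0 3 + 3 * tornheim b a 1 0 4 +
        3 * tornheim a b 1 0 4 + tornheim a b 2 0 3 := by
  rw [← tornheim_zero_right]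
  simp only [tornheim_succ_succ, tornheim_zero_left]
  ring

lemma tornheim_three_one_one (a b : ZMod N) :
    tornheim a b 3 1 1 =
      tornheim b a 1 0 4 + tornheim a b 1 0 4 + tornheim a b 2 0 3 + tornheim a b 3 0 2 := by
  simp only [tornheim_succ_succ, tornheim_zero_left]

end Tornheim

section LevelTwo

lemma sum_zmod_two (F : ZMod 2 → ℝ≥0∞) : ∑ a, F a = F 0 + F 1 := Fin.sum_univ_two F

lemma residueZeta_one_two : residueZeta (1 : ZMod 2) 2 = 3 * residueZeta (0 : ZMod 2) 2 := by
  have hdist := pow_mul_residueZeta_zero (N := 2) 2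
  rw [sum_zmod_two, Nat.cast_ofNat] at hdist
  refine (ENNReal.add_right_inj (residueZeta_ne_top (0 : ZMod 2) le_rfl)).1 (hdist.symm.trans ?_)
  ring

lemma residueZeta_one_five :
    residueZeta (1 : ZMod 2) 5 =
      2 * tornheim (1 : ZMod 2) 1 1 0 4 + tornheim (1 : ZMod 2) 1 2 0 3 +
        tornheim (1 : ZMod 2) 1 3 0 2 + tornheim (1 : ZMod 2) 0 2 0 3 +
        tornheim (1 : ZMod 2) 0 3 0 2 := by
  have hsum := sum_tornheim_one_one (1 : ZMod 2) 3
  rw [sum_zmod_two, sum_zmod_two, tornheim_three_one_one, tornheim_three_one_one, sub_zero,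
    sub_self] at hsum
  have hfinite : tornheim (0 : ZMod 2) 1 1 0 4 + tornheim (1 : ZMod 2) 0 1 0 4 ≠ ⊤ :=
    ENNReal.add_ne_top.2
      ⟨tornheim_ne_top 0 1 (by simp) (by simp), tornheim_ne_top 1 0 (by simp) (by simp)⟩
  refine (ENNReal.add_right_inj hfinite).1 (hsum.symm.trans ?_)
  ring

lemma tornheim_one_one_two_zero_three :
    tornheim (1 : ZMod 2) 1 2 0 3 =
      2 * tornheim (0 : ZMod 2) 1 2 0 3 + 3 * tornheim (0 : ZMod 2) 1 1 0 4 +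
        3 * tornheim (1 : ZMod 2) 0 1 0 4 + tornheim (1 : ZMod 2) 0 2 0 3 := by
  have hstuffle := residueZeta_mul_residueZeta (1 : ZMod 2) 0 2 3
  rw [residueZeta_two_mul_residueZeta_three, if_neg one_ne_zero, sub_zero, add_zero,
    show (0 - 1 : ZMod 2) = 1 from rfl, add_comm (tornheim 1 1 2 0 3)] at hstuffle
  have hfinite : tornheim (0 : ZMod 2) 1 3 0 2 ≠ ⊤ := tornheim_ne_top 0 1 (by simp) (by simp)
  refine (ENNReal.add_right_inj hfinite).1 (hstuffle.symm.trans ?_)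
  ring

lemma tornheim_one_one_three_zero_two :
    tornheim (1 : ZMod 2) 1 3 0 2 =
      tornheim (1 : ZMod 2) 0 3 0 2 + 2 * tornheim (1 : ZMod 2) 0 2 0 3 +
        3 * tornheim (1 : ZMod 2) 0 1 0 4 + 3 * tornheim (0 : ZMod 2) 1 1 0 4 := by
  have hstuffle := residueZeta_mul_residueZeta (0 : ZMod 2) 1 2 3
  rw [residueZeta_two_mul_residueZeta_three, if_neg zero_ne_one, sub_zero, add_zero,
    show (0 - 1 : ZMod 2) = 1 from rfl] at hstuffle
  have hfinite : tornheim (0 : ZMod 2) 1 2 0 3 ≠ ⊤ := tornheim_ne_top 0 1 (by simp) (by simp)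
  refine (ENNReal.add_right_inj hfinite).1 (hstuffle.symm.trans ?_)
  ring

theorem tornheim_one_one_eq_six_mul :
    tornheim (1 : ZMod 2) 1 3 0 2 = 6 * tornheim (1 : ZMod 2) 1 1 0 4 := by
  have hstuffle := residueZeta_mul_residueZeta (1 : ZMod 2) 1 2 3
  have hshuffle := residueZeta_two_mul_residueZeta_three (1 : ZMod 2) 1
  have heven := residueZeta_mul_residueZeta (1 : ZMod 2) 0 3 2
  have hdifference : tornheim (1 : ZMod 2) 1 2 0 3 +
      (tornheim (1 : ZMod 2) 0 2 0 3 + tornheim (1 : ZMod 2) 0 3 0 2) =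
        2 * tornheim (0 : ZMod 2) 1 2 0 3 + tornheim (1 : ZMod 2) 1 3 0 2 := by
    rw [tornheim_one_one_two_zero_three, tornheim_one_one_three_zero_two]
    ring
  rw [if_pos rfl, sub_self, residueZeta_one_five, hshuffle] at hstuffle
  rw [if_neg one_ne_zero, sub_zero, add_zero, show (0 - 1 : ZMod 2) = 1 from rfl] at heven
  rw [residueZeta_one_two, mul_assoc, mul_comm (residueZeta _ _), heven] at hshuffle
  clear heven
  -- The conclusion is a linear combination with subtractions, so it is taken in `ℝ`.
  lift tornheim (1 : ZMod 2) 1 1 0 4 to ℝ≥0 using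
    tornheim_ne_top 1 1 (by simp) (by simp) with s₁
  lift tornheim (1 : ZMod 2) 1 2 0 3 to ℝ≥0 using
    tornheim_ne_top 1 1 (by simp) (by simp) with s₂
  lift tornheim (1 : ZMod 2) 1 3 0 2 to ℝ≥0 using
    tornheim_ne_top 1 1 (by simp) (by simp) with s₃
  lift tornheim (1 : ZMod 2) 0 2 0 3 to ℝ≥0 using
    tornheim_ne_top 1 0 (by simp) (by simp) with v₂
  lift tornheim (1 : ZMod 2) 0 3 0 2 to ℝ≥0 using
    tornheim_ne_top 1 0 (by simp) (by simp) with v₃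
  lift tornheim (0 : ZMod 2) 1 2 0 3 to ℝ≥0 using
    tornheim_ne_top 0 1 (by simp) (by simp) with u₂
  norm_cast at hstuffle hshuffle hdifference ⊢
  rw [← NNReal.coe_inj] at hstuffle hshuffle hdifference ⊢
  push_cast at hstuffle hshuffle hdifference ⊢
  linarith

end LevelTwo

lemma tsum_residueInd_one (F : ℕ → ℝ≥0∞) :
    ∑' x : ℕ+, residueInd (1 : ZMod 2) x * F x = ∑' j : ℕ, F (2 * j + 1) := by
  have hinj : Function.Injective fun j : ℕ ↦ (2 * j).succPNat := fun i j hij ↦ by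
    have := congrArg PNat.val hij
    simp only [Nat.succPNat_coe] at this
    lia
  have hodd (x : ℕ+) : ((x : ℕ) : ZMod 2) = 1 ↔ ∃ j : ℕ, (2 * j).succPNat = x := by
    simp only [ZMod.natCast_eq_one_iff_odd, Odd, ← PNat.coe_inj, Nat.succPNat_coe,
      Nat.succ_eq_add_one, eq_comm (b := (x : ℕ))]
  have hsupp : Function.support (fun x : ℕ+ ↦ residueInd (1 : ZMod 2) x * F x) ⊆
      range fun j : ℕ ↦ (2 * j).succPNat := by
    intro x hx
    refine (hodd x).1 ?_
    by_contra h
    simp [residueInd, h] at hx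
  rw [← hinj.tsum_eq hsupp]
  refine tsum_congr fun j ↦ ?_
  rw [residueInd, if_pos ((hodd _).2 ⟨j, rfl⟩), one_mul, Nat.succPNat_coe]

lemma wordOp_indexWord_cons_eq_tsum_pnat {a : ℕ} (ha : 0 < a) (k : List ℕ) (h : ℕ → ℝ≥0∞)
    (n : ℕ) :
    wordOp (indexWord (a :: k)) h n = 2 * ∑' x : ℕ+, residueInd (1 : ZMod 2) x *
      (((n + x : ℕ) : ℝ≥0∞)⁻¹ ^ a * wordOp (indexWord k) h (n + x)) := by
  rw [wordOp_indexWord_cons ha, tsum_residueInd_one fun x ↦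
    ((n + x : ℕ) : ℝ≥0∞)⁻¹ ^ a * wordOp (indexWord k) h (n + x), ← ENNReal.tsum_mul_left]
  exact tsum_congr fun j ↦ mul_assoc _ _ _

lemma singleton_eq_residueZeta {a : ℕ} (ha : 0 < a) :
    MTV [a] = 2 * (residueZeta (1 : ZMod 2) a).toReal := by
  rw [eq_toReal_wordOp (by simpa), wordOp_indexWord_cons_eq_tsum_pnat ha]
  simp [indexWord, wordOp, residueZeta]

lemma pair_eq_tornheim {a b : ℕ} (ha : 0 < a) (hb : 0 < b) :
    MTV [a, b] = 4 * (tornheim (1 : ZMod 2) 1 a 0 b).toReal := by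
  have hword : wordOp (indexWord [a, b]) (fun _ ↦ 1) 0 = 4 * tornheim (1 : ZMod 2) 1 a 0 b := by
    simp only [wordOp_indexWord_cons_eq_tsum_pnat ha, wordOp_indexWord_cons_eq_tsum_pnat hb,
      tornheim, ← ENNReal.tsum_mul_left]
    refine tsum_congr fun x ↦ tsum_congr fun y ↦ ?_
    simp only [indexWord, wordOp, List.flatMap_nil, List.foldr_nil, zero_add, PNat.add_coe]
    ring
  rw [eq_toReal_wordOp (by simp [ha, hb]), hword, ENNReal.toReal_mul, ENNReal.toReal_ofNat]

theorem three_two_eq_six_mul_one_four : MTV [3, 2] = 6 * MTV [1, 4] := by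
  rw [pair_eq_tornheim three_pos two_pos, pair_eq_tornheim one_pos four_pos,
    tornheim_one_one_eq_six_mul, ENNReal.toReal_mul, ENNReal.toReal_ofNat]
  ring

theorem two_mul_three_eq_shuffle :
    MTV [2] * MTV [3] = MTV [3, 2] + 3 * MTV [2, 3] + 6 * MTV [1, 4] := by
  have hshuffle := residueZeta_two_mul_residueZeta_three (1 : ZMod 2) 1
  rw [singleton_eq_residueZeta two_pos, singleton_eq_residueZeta three_pos,
    pair_eq_tornheim three_pos two_pos, pair_eq_tornheim two_pos three_pos,
    pair_eq_tornheim one_pos four_pos, mul_mul_mul_comm, ← ENNReal.toReal_mul, hshuffle]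
  lift tornheim (1 : ZMod 2) 1 1 0 4 to ℝ≥0 using
    tornheim_ne_top 1 1 (by simp) (by simp) with s₁
  lift tornheim (1 : ZMod 2) 1 2 0 3 to ℝ≥0 using
    tornheim_ne_top 1 1 (by simp) (by simp) with s₂
  lift tornheim (1 : ZMod 2) 1 3 0 2 to ℝ≥0 using
    tornheim_ne_top 1 1 (by simp) (by simp) with s₃
  have hsum : (s₃ + 2 * s₂ + 3 * s₁ + 3 * s₁ + s₂ : ℝ≥0∞) =
      (s₃ + 3 * s₂ + 6 * s₁ : ℝ≥0) := by
    push_cast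
    ring
  rw [hsum]
  simp only [ENNReal.coe_toReal, NNReal.coe_add, NNReal.coe_mul, NNReal.coe_ofNat]
  ring

end MTV

/-- **Example (weight-5 triple sum formula).**
`2 T(1,1,3) + 2 T(1,2,2) + T(2,1,2) = (2/3) T(2) T(3)`. -/
theorem MTV_weight5_sum :
    2 * MTV [1, 1, 3] + 2 * MTV [1, 2, 2] + MTV [2, 1, 2]
      = 2 / 3 * MTV [2] * MTV [3] := by
  have hdual₁ : MTV [1, 1, 3] = MTV [1, 4] := MTV.eq_of_dual (by simp) (by simp) rfl
  have hdual₂ : MTV [1, 2, 2] = MTV [2, 3] := MTV.eq_of_dual (by simp) (by simp) rfl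
  have hdual₃ : MTV [2, 1, 2] = MTV [3, 2] := MTV.eq_of_dual (by simp) (by simp) rfl
  rw [hdual₁, hdual₂, hdual₃]
  linear_combination
    (1 / 3) * MTV.three_two_eq_six_mul_one_four - (2 / 3) * MTV.two_mul_three_eq_shuffle
end

section
/- For every positive integer q, ∑_{d≥1, l≥0, m≥0} 1/((2l+1)(2m+1)(2d+2l+1)^q (2d+2m+1)) = (3/8) · T(1, 1, q+1). -/
/-!
Put `O n = ∑_{j < n} 1/(2j+1)` and `S n = ∑_{k < n} O (k+1)/(2k+2)`. Grouping the terms of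
`T(1, 1, k)` by the largest index `2n+3` gives `T(1, 1, k) = 8 ∑ₙ S (n+1) / (2n+3)^k`.
In the triple sum, the sum over `m` telescopes to `O d / (2d)`. The `q`-th power depends only on
`d+l`, so grouping what remains by `n = d+l-1` leaves the convolution `∑ O d / (2d (2l+1))` over
`d+l = n+1`. Since `2d + (2l+1) = 2n+3`, partial fractions turn it into
`(S (n+1) + ∑ O d / (2l+1)) / (2n+3)`, and a second use of partial fractions shows that the last
convolution is `2 S (n+1)`. This is where the factor `3` comes from.

All terms being nonnegative, the rearrangements are carried out in `ℝ≥0∞`, where they need no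
summability assumption.
-/

open Finset Filter Topology ENNReal

/-- The odd harmonic number `1 + 1/3 + ⋯ + 1/(2n-1)`. -/
noncomputable def oddHarmonic (n : ℕ) : ℝ := ∑ j ∈ range n, 1 / (2 * (j : ℝ) + 1)

/-- The truncated double sum `∑ 1/(m₁ m₂)` over odd `m₁` and even `m₂` with `0 < m₁ < m₂ ≤ 2n`,
that is, `T(1, 1)` without its factor `4` and cut off at `2n`. -/
noncomputable def oddEvenHarmonic (n : ℕ) : ℝ :=
  ∑ k ∈ range n, oddHarmonic (k + 1) / (2 * ((k : ℝ) + 1))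

lemma oddHarmonic_nonneg (n : ℕ) : 0 ≤ oddHarmonic n :=
  sum_nonneg fun _ _ ↦ by positivity

lemma oddEvenHarmonic_nonneg (n : ℕ) : 0 ≤ oddEvenHarmonic n :=
  sum_nonneg fun k _ ↦ div_nonneg (oddHarmonic_nonneg (k + 1)) (by positivity)

section Telescoping

lemma sum_range_sub_add_eq {G : Type*} [AddCommGroup G] (f : ℕ → G) (d n : ℕ) :
    ∑ m ∈ range n, (f m - f (m + d)) = ∑ j ∈ range d, f j - ∑ j ∈ range d, f (n + j) := by
  have h : ∑ m ∈ range n, f m + ∑ j ∈ range d, f (n + j)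
      = ∑ j ∈ range d, f j + ∑ m ∈ range n, f (m + d) := by
    simp only [← sum_range_add, add_comm _ d]
  rw [sum_sub_distrib, sub_eq_sub_iff_add_eq_add, h]

lemma hasSum_sub_add_of_antitone {f : ℕ → ℝ} (hf : Antitone f) (hf₀ : Tendsto f atTop (𝓝 0))
    (d : ℕ) : HasSum (fun m ↦ f m - f (m + d)) (∑ j ∈ range d, f j) := by
  rw [hasSum_iff_tendsto_nat_of_nonneg fun m ↦ sub_nonneg.2 (hf (m.le_add_right d))]
  have htail : Tendsto (fun n ↦ ∑ j ∈ range d, f (n + j)) atTop (𝓝 0) := by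
    simpa only [sum_const_zero] using
      tendsto_finsetSum (range d) fun j _ ↦ (tendsto_add_atTop_iff_nat j).2 hf₀
  simpa only [sum_range_sub_add_eq, sub_zero] using htail.const_sub (∑ j ∈ range d, f j)

lemma antitone_one_div_two_mul_add_one : Antitone fun m : ℕ ↦ 1 / (2 * (m : ℝ) + 1) :=
  fun _ _ h ↦ by dsimp only; gcongr

lemma tendsto_one_div_two_mul_add_one :
    Tendsto (fun m : ℕ ↦ 1 / (2 * (m : ℝ) + 1)) atTop (𝓝 0) :=
  tendsto_const_nhds.div_atTop <| tendsto_atTop_add_const_right _ _ <|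
    tendsto_natCast_atTop_atTop.const_mul_atTop two_pos

lemma hasSum_one_div_odd_mul_odd_add {d : ℕ} (hd : d ≠ 0) :
    HasSum (fun m : ℕ ↦ 1 / ((2 * (m : ℝ) + 1) * (2 * (d : ℝ) + 2 * m + 1)))
      (oddHarmonic d / (2 * d)) := by
  have telescoped := (hasSum_sub_add_of_antitone antitone_one_div_two_mul_add_one
    tendsto_one_div_two_mul_add_one d).div_const (2 * (d : ℝ))
  refine telescoped.congr_fun fun m ↦ ?_
  have h : 2 * ((m : ℝ) + d) + 1 ≠ 0 := by positivity
  push_cast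
  field_simp
  ring

end Telescoping

section Convolution

lemma sum_antidiagonal_fst {M : Type*} [AddCommMonoid M] (f : ℕ → M) (n : ℕ) :
    ∑ p ∈ antidiagonal n, f p.1 = ∑ k ∈ range (n + 1), f k :=
  Nat.sum_antidiagonal_eq_sum_range_succ (fun a _ ↦ f a) n

lemma sum_antidiagonal_snd {M : Type*} [AddCommMonoid M] (f : ℕ → M) (n : ℕ) :
    ∑ p ∈ antidiagonal n, f p.2 = ∑ k ∈ range (n + 1), f k := by
  rw [← sum_antidiagonal_fst, ← Nat.sum_antidiagonal_swap]
  rfl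

lemma sum_antidiagonal_sum_range_mul {R : Type*} [NonUnitalNonAssocSemiring R] (f g : ℕ → R)
    (n : ℕ) :
    ∑ p ∈ antidiagonal n, (∑ j ∈ range (p.1 + 1), f j) * g p.2
      = ∑ k ∈ range (n + 1), ∑ p ∈ antidiagonal k, f p.1 * g p.2 := by
  induction n with
  | zero => simp
  | succ n ih =>
    rw [sum_range_succ, ← ih, Nat.sum_antidiagonal_succ, Nat.sum_antidiagonal_succ]
    simp only [sum_range_succ _ (_ + 1), add_mul, sum_add_distrib, zero_add, sum_range_one]
    exact add_left_comm _ _ _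

lemma sum_antidiagonal_one_div_odd_mul_odd (n : ℕ) :
    ∑ p ∈ antidiagonal n, 1 / (2 * (p.1 : ℝ) + 1) * (1 / (2 * (p.2 : ℝ) + 1))
      = 2 * (oddHarmonic (n + 1) / (2 * ((n : ℝ) + 1))) := by
  have partial_fractions : ∀ p ∈ antidiagonal n,
      1 / (2 * (p.1 : ℝ) + 1) * (1 / (2 * (p.2 : ℝ) + 1))
        = (1 / (2 * (p.1 : ℝ) + 1) + 1 / (2 * (p.2 : ℝ) + 1)) / (2 * ((n : ℝ) + 1)) := by
    rintro ⟨a, b⟩ hp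
    obtain rfl := mem_antidiagonal.1 hp
    push_cast
    field_simp
    ring
  rw [sum_congr rfl partial_fractions, ← sum_div, sum_add_distrib,
    sum_antidiagonal_fst fun k ↦ 1 / (2 * (k : ℝ) + 1),
    sum_antidiagonal_snd fun k ↦ 1 / (2 * (k : ℝ) + 1), ← two_mul, mul_div_assoc, oddHarmonic]

lemma sum_antidiagonal_oddHarmonic_mul_one_div_odd (n : ℕ) :
    ∑ p ∈ antidiagonal n, oddHarmonic (p.1 + 1) * (1 / (2 * (p.2 : ℝ) + 1))
      = 2 * oddEvenHarmonic (n + 1) := by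
  simp only [oddHarmonic, sum_antidiagonal_sum_range_mul (fun j ↦ 1 / (2 * (j : ℝ) + 1))
    (fun j ↦ 1 / (2 * (j : ℝ) + 1)), sum_antidiagonal_one_div_odd_mul_odd, oddEvenHarmonic, mul_sum]

lemma sum_antidiagonal_oddHarmonic_div_even_mul_one_div_odd (n : ℕ) :
    ∑ p ∈ antidiagonal n,
        oddHarmonic (p.1 + 1) / (2 * ((p.1 : ℝ) + 1)) * (1 / (2 * (p.2 : ℝ) + 1))
      = 3 * oddEvenHarmonic (n + 1) / (2 * (n : ℝ) + 3) := by
  have partial_fractions : ∀ p ∈ antidiagonal n,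
      oddHarmonic (p.1 + 1) / (2 * ((p.1 : ℝ) + 1)) * (1 / (2 * (p.2 : ℝ) + 1))
        = (oddHarmonic (p.1 + 1) * (1 / (2 * (p.2 : ℝ) + 1))
          + oddHarmonic (p.1 + 1) / (2 * ((p.1 : ℝ) + 1))) / (2 * (n : ℝ) + 3) := by
    rintro ⟨a, b⟩ hp
    obtain rfl := mem_antidiagonal.1 hp
    push_cast
    field_simp
    ring
  rw [sum_congr rfl partial_fractions, ← sum_div, sum_add_distrib,
    sum_antidiagonal_oddHarmonic_mul_one_div_odd,
    sum_antidiagonal_fst fun k ↦ oddHarmonic (k + 1) / (2 * ((k : ℝ) + 1)), ← oddEvenHarmonic]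
  ring

end Convolution

section Rearrangement

lemma tsum_eq_tsum_of_tsum_ofReal_eq {α β : Type*} {f : α → ℝ} {g : β → ℝ} (hf : ∀ a, 0 ≤ f a)
    (hg : ∀ b, 0 ≤ g b) (h : ∑' a, ENNReal.ofReal (f a) = ∑' b, ENNReal.ofReal (g b)) :
    ∑' a, f a = ∑' b, g b := by
  have toReal_eq := congrArg ENNReal.toReal h
  simpa only [ENNReal.tsum_toReal_eq fun _ ↦ ofReal_ne_top, toReal_ofReal (hf _),
    toReal_ofReal (hg _)] using toReal_eq

lemma ennreal_tsum_tsum_eq_tsum_sum_antidiagonal {A : Type*} [AddCommMonoid A] [HasAntidiagonal A]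
    (f : A → A → ℝ≥0∞) :
    ∑' a, ∑' b, f a b = ∑' n, ∑ p ∈ antidiagonal n, f p.1 p.2 := by
  rw [← ENNReal.tsum_prod, ← HasAntidiagonal.sigmaAntidiagonalEquivProd.tsum_eq,
    ENNReal.tsum_sigma']
  exact tsum_congr fun n ↦ (antidiagonal n).tsum_subtype fun p ↦ f p.1 p.2

lemma tsum_tsum_ofReal_mul_add {A : Type*} [AddCommMonoid A] [HasAntidiagonal A] {c : A → A → ℝ}
    (hc : ∀ a b, 0 ≤ c a b) (w : A → ℝ≥0∞) :
    ∑' a, ∑' b, ENNReal.ofReal (c a b) * w (a + b)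
      = ∑' n, ENNReal.ofReal (∑ p ∈ antidiagonal n, c p.1 p.2) * w n := by
  rw [ennreal_tsum_tsum_eq_tsum_sum_antidiagonal]
  refine tsum_congr fun n ↦ ?_
  rw [ENNReal.ofReal_sum_of_nonneg fun p _ ↦ hc p.1 p.2, sum_mul]
  exact sum_congr rfl fun p hp ↦ by rw [mem_antidiagonal.1 hp]

lemma tsum_triple_mul_weight_eq_tsum_oddEvenHarmonic (w : ℕ → ℝ≥0∞) :
    ∑' p : ℕ × ℕ × ℕ, ENNReal.ofReal (1 / ((2 * (p.2.1 : ℝ) + 1) * (2 * (p.2.2 : ℝ) + 1)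
        * (2 * ((p.1 : ℝ) + 1) + 2 * (p.2.2 : ℝ) + 1))) * w (p.1 + p.2.1)
      = ∑' n : ℕ, ENNReal.ofReal (3 * oddEvenHarmonic (n + 1) / (2 * (n : ℝ) + 3)) * w n := by
  have tsum_m (d l : ℕ) : ∑' m : ℕ, ENNReal.ofReal (1 / ((2 * (l : ℝ) + 1) * (2 * (m : ℝ) + 1)
        * (2 * ((d : ℝ) + 1) + 2 * (m : ℝ) + 1)))
      = ENNReal.ofReal (oddHarmonic (d + 1) / (2 * ((d : ℝ) + 1)) * (1 / (2 * (l : ℝ) + 1))) := by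
    have h := (hasSum_one_div_odd_mul_odd_add d.succ_ne_zero).mul_right (1 / (2 * (l : ℝ) + 1))
    push_cast at h
    rw [← h.tsum_eq, ENNReal.ofReal_tsum_of_nonneg (fun m ↦ by positivity) h.summable]
    refine tsum_congr fun m ↦ congrArg ENNReal.ofReal ?_
    rw [one_div_mul_one_div]
    ring
  simp only [ENNReal.tsum_prod', ENNReal.tsum_mul_right, tsum_m]
  rw [tsum_tsum_ofReal_mul_add (c := fun d l ↦
    oddHarmonic (d + 1) / (2 * ((d : ℝ) + 1)) * (1 / (2 * (l : ℝ) + 1)))]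
  · simp only [sum_antidiagonal_oddHarmonic_div_even_mul_one_div_odd]
  · intro d l
    have := oddHarmonic_nonneg (d + 1)
    positivity

lemma tsum_odd_even_mul_weight_eq_tsum_oddEvenHarmonic (w : ℕ → ℝ≥0∞) :
    ∑' p : ℕ × ℕ × ℕ, ENNReal.ofReal (1 / (2 * (p.1 : ℝ) + 1) / (2 * ((p.1 + p.2.1 : ℕ) + 1 : ℝ)))
        * w (p.1 + p.2.1 + p.2.2)
      = ∑' n : ℕ, ENNReal.ofReal (oddEvenHarmonic (n + 1)) * w n := by
  have sum_odd (k : ℕ) : ∑ p ∈ antidiagonal k,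
        1 / (2 * (p.1 : ℝ) + 1) / (2 * ((p.1 + p.2 : ℕ) + 1 : ℝ))
      = oddHarmonic (k + 1) / (2 * ((k : ℝ) + 1)) := by
    rw [oddHarmonic, ← sum_antidiagonal_fst, sum_div]
    exact sum_congr rfl fun p hp ↦ by rw [mem_antidiagonal.1 hp]
  simp only [ENNReal.tsum_prod', ENNReal.tsum_mul_left]
  rw [tsum_tsum_ofReal_mul_add (c := fun a b : ℕ ↦
    1 / (2 * (a : ℝ) + 1) / (2 * ((a + b : ℕ) + 1 : ℝ))) (fun a b ↦ by positivity)
    fun k ↦ ∑' c, w (k + c)]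
  simp only [sum_odd, ← ENNReal.tsum_mul_left]
  rw [tsum_tsum_ofReal_mul_add (c := fun k _ ↦ oddHarmonic (k + 1) / (2 * ((k : ℝ) + 1)))
    fun k _ ↦ div_nonneg (oddHarmonic_nonneg (k + 1)) (by positivity)]
  simp only [sum_antidiagonal_fst fun k ↦ oddHarmonic (k + 1) / (2 * ((k : ℝ) + 1)),
    oddEvenHarmonic]

end Rearrangement

/-- The parametrisation of the index set of `MTV` in depth three by the gaps between consecutive
indices, halved and rounded down: `(a, b, c) ↦ (2a + 1, 2(a + b) + 2, 2(a + b + c) + 3)`. -/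
def alternatingTripleEquiv : ℕ × ℕ × ℕ ≃
    {f : Fin 3 → ℕ // StrictMono f ∧ ∀ i, f i % 2 = ((i : ℕ) + 1) % 2} where
  toFun p := ⟨![2 * p.1 + 1, 2 * (p.1 + p.2.1) + 2, 2 * (p.1 + p.2.1 + p.2.2) + 3], by
    refine ⟨Fin.strictMono_iff_lt_succ.2 fun i ↦ ?_, fun i ↦ ?_⟩ <;> fin_cases i <;> simp⟩
  invFun f := (f.1 0 / 2, (f.1 1 - f.1 0) / 2, (f.1 2 - f.1 1) / 2)
  left_inv := by
    rintro ⟨a, b, c⟩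
    simp only [Matrix.cons_val, Prod.mk.injEq]
    omega
  right_inv := by
    rintro ⟨f, hf, hparity⟩
    have h01 : f 0 < f 1 := hf (by decide)
    have h12 : f 1 < f 2 := hf (by decide)
    have h0 : f 0 % 2 = 1 := hparity 0
    have h1 : f 1 % 2 = 0 := hparity 1
    have h2 : f 2 % 2 = 1 := hparity 2
    ext i
    fin_cases i <;> simp <;> omega

lemma MTV_triple_eq_tsum (k₁ k₂ k₃ : ℕ) :
    MTV [k₁, k₂, k₃] = 8 * ∑' p : ℕ × ℕ × ℕ, 1 / (2 * (p.1 : ℝ) + 1) ^ k₁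
      * (1 / (2 * ((p.1 + p.2.1 : ℕ) : ℝ) + 2) ^ k₂)
      * (1 / (2 * ((p.1 + p.2.1 + p.2.2 : ℕ) : ℝ) + 3) ^ k₃) := by
  have unfolded : MTV [k₁, k₂, k₃] = 2 ^ 3 *
      ∑' f : {f : Fin 3 → ℕ // StrictMono f ∧ ∀ i, f i % 2 = ((i : ℕ) + 1) % 2},
        ∏ i : Fin 3, (1 : ℝ) / (f.1 i : ℝ) ^ [k₁, k₂, k₃].get i := rfl
  rw [unfolded, ← alternatingTripleEquiv.tsum_eq]
  congr 1
  · norm_num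
  · refine tsum_congr fun p ↦ ?_
    simp only [alternatingTripleEquiv, Equiv.coe_fn_mk, Fin.prod_univ_three, List.get,
      Matrix.cons_val]
    push_cast
    ring

lemma MTV_one_one_eq_tsum_oddEvenHarmonic (k : ℕ) :
    MTV [1, 1, k] = 8 * ∑' n : ℕ, oddEvenHarmonic (n + 1) / (2 * (n : ℝ) + 3) ^ k := by
  rw [MTV_triple_eq_tsum]
  congr 1
  refine tsum_eq_tsum_of_tsum_ofReal_eq (fun p ↦ by positivity)
    (fun n ↦ div_nonneg (oddEvenHarmonic_nonneg _) (by positivity)) ?_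
  convert tsum_odd_even_mul_weight_eq_tsum_oddEvenHarmonic
    fun n ↦ ENNReal.ofReal (1 / (2 * (n : ℝ) + 3) ^ k) using 3 with p n
  · rw [← ENNReal.ofReal_mul (by positivity)]
    congr 1
    field_simp
  · rw [← ENNReal.ofReal_mul (oddEvenHarmonic_nonneg _), mul_one_div]

lemma tsum_triple_eq_tsum_oddEvenHarmonic (q : ℕ) :
    ∑' p : ℕ × ℕ × ℕ, 1 / ((2 * (p.2.1 : ℝ) + 1) * (2 * (p.2.2 : ℝ) + 1)
        * (2 * ((p.1 : ℝ) + 1) + 2 * (p.2.1 : ℝ) + 1) ^ q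
        * (2 * ((p.1 : ℝ) + 1) + 2 * (p.2.2 : ℝ) + 1))
      = 3 * ∑' n : ℕ, oddEvenHarmonic (n + 1) / (2 * (n : ℝ) + 3) ^ (q + 1) := by
  rw [← tsum_mul_left]
  refine tsum_eq_tsum_of_tsum_ofReal_eq (fun p ↦ by positivity)
    (fun n ↦ mul_nonneg (by norm_num) (div_nonneg (oddEvenHarmonic_nonneg _) (by positivity))) ?_
  convert tsum_triple_mul_weight_eq_tsum_oddEvenHarmonic
    fun n ↦ ENNReal.ofReal (1 / (2 * (n : ℝ) + 3) ^ q) using 3 with p n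
  · rw [← ENNReal.ofReal_mul (by positivity)]
    congr 1
    push_cast
    rw [one_div_mul_one_div]
    ring
  · have := oddEvenHarmonic_nonneg (n + 1)
    rw [← ENNReal.ofReal_mul (by positivity)]
    congr 1
    rw [pow_succ]
    field_simp

/-- **Lemma.** For every positive integer `q`,
`∑_{d≥1, l≥0, m≥0} 1/((2l+1)(2m+1)(2d+2l+1)^q (2d+2m+1)) = (3/8) T(1,1,q+1)`.
(Below `p = (p₁, p₂, p₃)` corresponds to `(d, l, m) = (p₁ + 1, p₂, p₃)`.) -/
theorem triple_sum_eq_T11 (q : ℕ) (hq : 1 ≤ q) :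
    (∑' p : ℕ × ℕ × ℕ,
        1 / ((2 * (p.2.1 : ℝ) + 1) * (2 * (p.2.2 : ℝ) + 1)
          * (2 * ((p.1 : ℝ) + 1) + 2 * (p.2.1 : ℝ) + 1) ^ q
          * (2 * ((p.1 : ℝ) + 1) + 2 * (p.2.2 : ℝ) + 1)))
      = 3 / 8 * MTV [1, 1, q + 1] := by
  rw [tsum_triple_eq_tsum_oddEvenHarmonic, MTV_one_one_eq_tsum_oddEvenHarmonic]
  ring
end

section
/- For every positive integer q, ∑_{l,m,n≥0} 1/((2l+1)(2m+1)(2n+1)^q (2l+2m+2n+3)) = (1/4) ∑_{a+b+c=q+3, a≥1, b≥1, c≥2} T(a, b, c) + (1/4) ∑_{j=2}^{q+1} T(1, q+2−j, j) + (1/4) T(1, 1, q+1). -/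
open Finset

/-!
Put `x = 2l + 1`, `y = 2m + 1`, `z = 2n + 1`: the arguments of a triple T-value are `x`, `x + y`,
`x + y + z`. Symmetry in `x, y` and `1 / (xy) = 1 / (x(x + y)) + 1 / (y(x + y))` turn the left-hand
side into twice the series of `1 / (x (x + y) z ^ q (x + y + z))`. The expansion of
`1 / (v z ^ q)` in powers of `z` and `v + z`, used with `v = x + y` and then with `v = x`,
decomposes this summand into T-value summands up to permutation of `x, y, z`, which does not affect
the sums. The argument lets `x, y, z` run over any family of reals `≥ 1` for which the series with
`q = 1` converges, since that series dominates all the others.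
-/

section PartialFractions

variable {K : Type*} [Field K] {x y z : K}

/-- The summand of a multiple harmonic sum of depth three with exponents `a, b, c`, written in the
gaps `x, y, z` between consecutive summation variables: those variables are `x`, `x + y` and
`x + y + z`. -/
def nestedTerm (a b c : ℕ) (x y z : K) : K :=
  1 / (x ^ a * (x + y) ^ b * (x + y + z) ^ c)

theorem one_div_mul_mul_mul_add_eq_add (hx : x ≠ 0) (hy : y ≠ 0) (hxy : x + y ≠ 0) (z t : K) :
    1 / (x * y * t * (x + y + z)) =
      1 / (x * (x + y) * t * (x + y + z)) + 1 / (y * (y + x) * t * (y + x + z)) := by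
  have hpair : 1 / (x * y) = 1 / (x * (x + y)) + 1 / (y * (x + y)) := by
    field_simp
    ring
  rw [add_comm y x]
  simp only [mul_assoc _ t, ← one_div_mul_one_div _ (t * _), hpair, add_mul]

theorem one_div_mul_pow_succ_eq_add_sum_antidiagonal (hx : x ≠ 0) (hz : z ≠ 0) (hxz : x + z ≠ 0)
    (n : ℕ) :
    1 / (x * z ^ (n + 1)) = 1 / (x * (x + z) ^ (n + 1)) +
      ∑ ij ∈ antidiagonal n, 1 / (z ^ (ij.1 + 1) * (x + z) ^ (ij.2 + 1)) := by
  have hgeom := (Commute.all z⁻¹ (x + z)⁻¹).geom_sum₂_mul (n + 1)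
  have hsum : ∑ ij ∈ antidiagonal n, 1 / (z ^ (ij.1 + 1) * (x + z) ^ (ij.2 + 1)) =
      (∑ i ∈ range (n + 1), z⁻¹ ^ i * (x + z)⁻¹ ^ (n + 1 - 1 - i)) * (z⁻¹ * (x + z)⁻¹) := by
    rw [Nat.sum_antidiagonal_eq_sum_range_succ_mk, sum_mul]
    refine sum_congr rfl fun i _ ↦ ?_
    simp only [Nat.add_sub_cancel, one_div, mul_inv, pow_succ, inv_pow]
    ring
  have hdiff : z⁻¹ * (x + z)⁻¹ = (z⁻¹ - (x + z)⁻¹) * x⁻¹ := by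
    field_simp
    ring
  rw [hsum, hdiff, ← mul_assoc, hgeom]
  simp only [one_div, mul_inv, inv_pow]
  ring

theorem one_div_mul_pow_succ_mul_pow_eq_nestedTerm (hx : x ≠ 0) (hz : z ≠ 0) (hxz : x + z ≠ 0)
    (n c : ℕ) :
    1 / (x * z ^ (n + 1) * (x + y + z) ^ c) = nestedTerm 1 (n + 1) c x z y +
      ∑ kl ∈ antidiagonal n, nestedTerm (kl.1 + 1) (kl.2 + 1) c z x y := by
  simp only [nestedTerm, add_right_comm x z y, add_comm z x, pow_one, ← one_div_mul_one_div,
    ← sum_mul, ← add_mul]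
  simp only [one_div_mul_one_div,
    one_div_mul_pow_succ_eq_add_sum_antidiagonal hx hz hxz]

theorem one_div_mul_add_mul_pow_succ_mul_eq_nestedTerm (hx : x ≠ 0) (hz : z ≠ 0) (hxy : x + y ≠ 0)
    (hxz : x + z ≠ 0) (hxyz : x + y + z ≠ 0) (n : ℕ) :
    1 / (x * (x + y) * z ^ (n + 1) * (x + y + z)) = nestedTerm 1 1 (n + 2) x y z +
      ∑ ij ∈ antidiagonal n, (nestedTerm 1 (ij.1 + 1) (ij.2 + 2) x z y +
        ∑ kl ∈ antidiagonal ij.1, nestedTerm (kl.1 + 1) (kl.2 + 1) (ij.2 + 2) z x y) := by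
  calc
    _ = 1 / ((x + y) * z ^ (n + 1)) * (1 / (x * (x + y + z))) := by
      rw [one_div_mul_one_div]
      ring_nf
    _ = nestedTerm 1 1 (n + 2) x y z +
        ∑ ij ∈ antidiagonal n, 1 / (x * z ^ (ij.1 + 1) * (x + y + z) ^ (ij.2 + 2)) := by
      rw [one_div_mul_pow_succ_eq_add_sum_antidiagonal hxy hz hxyz, add_mul, sum_mul]
      simp only [nestedTerm, one_div_mul_one_div]
      ring_nf
    _ = _ := by
      simp only [one_div_mul_pow_succ_mul_pow_eq_nestedTerm hx hz hxz]

end PartialFractions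

section Reindexing

variable {M : Type*} [AddCommMonoid M]

theorem sum_Icc_two_eq_sum_antidiagonal (f : ℕ → ℕ → M) (n : ℕ) :
    ∑ j ∈ Icc 2 (n + 2), f (n + 3 - j) j = ∑ ij ∈ antidiagonal n, f (ij.1 + 1) (ij.2 + 2) := by
  refine sum_nbij' (fun j ↦ (n + 2 - j, j - 2)) (fun ij ↦ ij.2 + 2) ?_ ?_ ?_ ?_ ?_ <;>
    grind [HasAntidiagonal.mem_antidiagonal]

theorem sum_filter_add_add_eq_sum_antidiagonal (f : ℕ → ℕ → ℕ → M) (n : ℕ) :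
    ∑ p ∈ (Icc 1 (n + 4) ×ˢ Icc 1 (n + 4) ×ˢ Icc 2 (n + 4)).filter
        (fun p ↦ p.1 + p.2.1 + p.2.2 = n + 4), f p.1 p.2.1 p.2.2 =
      ∑ ij ∈ antidiagonal n, ∑ kl ∈ antidiagonal ij.1, f (kl.1 + 1) (kl.2 + 1) (ij.2 + 2) := by
  rw [sum_sigma']
  refine sum_nbij' (fun p ↦ ⟨(p.1 + p.2.1 - 2, p.2.2 - 2), (p.1 - 1, p.2.1 - 1)⟩)
    (fun s ↦ (s.2.1 + 1, s.2.2 + 1, s.1.2 + 2)) ?_ ?_ ?_ ?_ ?_ <;>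
    grind [HasAntidiagonal.mem_antidiagonal]

end Reindexing

section Convergence

variable {x y z : ℝ}

theorem nestedTerm_nonneg (a b c : ℕ) (hx : 0 ≤ x) (hy : 0 ≤ y) (hz : 0 ≤ z) :
    0 ≤ nestedTerm a b c x y z := by
  unfold nestedTerm
  positivity

theorem nestedTerm_le_one_div {a b c : ℕ} (ha : 1 ≤ a) (hb : 1 ≤ b) (hc : 2 ≤ c)
    (hx : 1 ≤ x) (hy : 1 ≤ y) (hz : 1 ≤ z) :
    nestedTerm a b c x y z ≤ 1 / (x * y * z * (x + y + z)) := by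
  have hxa : x ≤ x ^ a := le_self_pow₀ hx (by lia)
  have hyb : y ≤ (x + y) ^ b :=
    (by linarith : y ≤ x + y).trans (le_self_pow₀ (by linarith) (by lia))
  have hzc : z * (x + y + z) ≤ (x + y + z) ^ c := calc
    z * (x + y + z) ≤ (x + y + z) ^ 2 := by rw [sq]; gcongr; linarith
    _ ≤ (x + y + z) ^ c := pow_le_pow_right₀ (by linarith) hc
  refine one_div_le_one_div_of_le (by positivity) ?_
  rw [mul_assoc]
  gcongr

theorem one_div_mul_mul_mul_add_le_rpow (hx : 0 < x) (hy : 0 < y) (hz : 0 < z) :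
    1 / (x * y * z * (x + y + z)) ≤
      x ^ (-(4 / 3) : ℝ) * (y ^ (-(4 / 3) : ℝ) * z ^ (-(4 / 3) : ℝ)) := by
  have hroot : (x * y * z) ^ (3⁻¹ : ℝ) ≤ x + y + z := by
    rw [Real.rpow_inv_le_iff_of_pos (by positivity) (by positivity) (by norm_num)]
    norm_cast
    calc x * y * z ≤ (x + y + z) * (x + y + z) * (x + y + z) := by gcongr <;> linarith
      _ = (x + y + z) ^ 3 := by ring
  calc 1 / (x * y * z * (x + y + z)) ≤ 1 / (x * y * z * (x * y * z) ^ (3⁻¹ : ℝ)) := by gcongr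
    _ = (x * y * z) ^ (-(4 / 3) : ℝ) := by
      rw [Real.rpow_neg (by positivity), one_div,
        ← Real.rpow_one_add' (by positivity) (by norm_num)]
      norm_num
    _ = _ := by
      rw [Real.mul_rpow (by positivity) hz.le, Real.mul_rpow hx.le hy.le, mul_assoc]

variable {ι : Type*} {u : ι → ℝ}

theorem summable_one_div_mul_mul_mul_add_of_rpow (hu : ∀ i, 0 < u i)
    (hs : Summable fun i ↦ u i ^ (-(4 / 3) : ℝ)) :
    Summable fun p : ι × ι × ι ↦
      1 / (u p.1 * u p.2.1 * u p.2.2 * (u p.1 + u p.2.1 + u p.2.2)) := by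
  have hpos i : 0 < u i ^ (-(4 / 3) : ℝ) := Real.rpow_pos_of_pos (hu i) _
  have hprod := hs.mul_of_nonneg (hs.mul_of_nonneg hs (fun i ↦ (hpos i).le) fun i ↦ (hpos i).le)
    (fun i ↦ (hpos i).le) fun p ↦ (mul_pos (hpos _) (hpos _)).le
  refine hprod.of_nonneg_of_le (fun p ↦ ?_) fun p ↦
    one_div_mul_mul_mul_add_le_rpow (hu _) (hu _) (hu _)
  have := hu p.1
  have := hu p.2.1
  have := hu p.2.2
  positivity

/-- The multiple harmonic series of depth three with exponents `a, b, c` whose gaps run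
independently over the values of `u`. Odd gaps give multiple T-values up to the factor `2 ^ 3`. -/
noncomputable def nestedSum (u : ι → ℝ) (a b c : ℕ) : ℝ :=
  ∑' p : ι × ι × ι, nestedTerm a b c (u p.1) (u p.2.1) (u p.2.2)

theorem hasSum_nestedSum {a b c : ℕ} (ha : 1 ≤ a) (hb : 1 ≤ b) (hc : 2 ≤ c) (hu : ∀ i, 1 ≤ u i)
    (hs : Summable fun p : ι × ι × ι ↦
      1 / (u p.1 * u p.2.1 * u p.2.2 * (u p.1 + u p.2.1 + u p.2.2))) :
    HasSum (fun p : ι × ι × ι ↦ nestedTerm a b c (u p.1) (u p.2.1) (u p.2.2))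
      (nestedSum u a b c) := by
  have hnonneg i : 0 ≤ u i := zero_le_one.trans (hu i)
  exact (hs.of_nonneg_of_le
    (fun p ↦ nestedTerm_nonneg a b c (hnonneg _) (hnonneg _) (hnonneg _))
    fun p ↦ nestedTerm_le_one_div ha hb hc (hu _) (hu _) (hu _)).hasSum

theorem hasSum_one_div_mul_add_mul_pow_succ_mul (hu : ∀ i, 1 ≤ u i)
    (hs : Summable fun p : ι × ι × ι ↦
      1 / (u p.1 * u p.2.1 * u p.2.2 * (u p.1 + u p.2.1 + u p.2.2))) (n : ℕ) :
    HasSum (fun p : ι × ι × ι ↦ 1 / (u p.1 * (u p.1 + u p.2.1) * u p.2.2 ^ (n + 1) *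
        (u p.1 + u p.2.1 + u p.2.2)))
      (nestedSum u 1 1 (n + 2) +
        ∑ ij ∈ antidiagonal n, (nestedSum u 1 (ij.1 + 1) (ij.2 + 2) +
          ∑ kl ∈ antidiagonal ij.1, nestedSum u (kl.1 + 1) (kl.2 + 1) (ij.2 + 2))) := by
  have hpos i : 0 < u i := zero_lt_one.trans_le (hu i)
  let swapLast : ι × ι × ι ≃ ι × ι × ι := (Equiv.refl ι).prodCongr (Equiv.prodComm ι ι)
  let rotate : ι × ι × ι ≃ ι × ι × ι := (Equiv.prodAssoc ι ι ι).symm.trans (Equiv.prodComm _ ι)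
  have hterm {a b c : ℕ} (ha : 1 ≤ a) (hb : 1 ≤ b) (hc : 2 ≤ c) :=
    hasSum_nestedSum ha hb hc hu hs
  refine ((hterm le_rfl le_rfl (by lia)).add <| hasSum_sum fun ij _ ↦
    (swapLast.hasSum_iff.2 (hterm le_rfl (by lia) (by lia))).add <| hasSum_sum fun kl _ ↦
      rotate.hasSum_iff.2 (hterm (by lia) (by lia) (by lia))).congr_fun fun p ↦ ?_
  have hx := hpos p.1
  have hy := hpos p.2.1
  have hz := hpos p.2.2
  exact one_div_mul_add_mul_pow_succ_mul_eq_nestedTerm (by positivity) (by positivity)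
    (by positivity) (by positivity) (by positivity) n

theorem triple_sum_I1_general (hu : ∀ i, 1 ≤ u i)
    (hs : Summable fun p : ι × ι × ι ↦
      1 / (u p.1 * u p.2.1 * u p.2.2 * (u p.1 + u p.2.1 + u p.2.2))) {q : ℕ} (hq : 1 ≤ q) :
    ∑' p : ι × ι × ι, 1 / (u p.1 * u p.2.1 * u p.2.2 ^ q * (u p.1 + u p.2.1 + u p.2.2)) =
      2 * (∑ p ∈ (Icc 1 (q + 3) ×ˢ Icc 1 (q + 3) ×ˢ Icc 2 (q + 3)).filter
          (fun p ↦ p.1 + p.2.1 + p.2.2 = q + 3), nestedSum u p.1 p.2.1 p.2.2) +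
        2 * (∑ j ∈ Icc 2 (q + 1), nestedSum u 1 (q + 2 - j) j) +
        2 * nestedSum u 1 1 (q + 1) := by
  obtain ⟨n, rfl⟩ := Nat.exists_eq_add_of_le' hq
  let swapFirst : ι × ι × ι ≃ ι × ι × ι :=
    ((Equiv.prodAssoc ι ι ι).symm.trans ((Equiv.prodComm ι ι).prodCongr (Equiv.refl ι))).trans
      (Equiv.prodAssoc ι ι ι)
  have hpos i : 0 < u i := zero_lt_one.trans_le (hu i)
  have hsum := hasSum_one_div_mul_add_mul_pow_succ_mul hu hs n
  have hsplit (p : ι × ι × ι) :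
      1 / (u p.1 * u p.2.1 * u p.2.2 ^ (n + 1) * (u p.1 + u p.2.1 + u p.2.2)) =
        1 / (u p.1 * (u p.1 + u p.2.1) * u p.2.2 ^ (n + 1) * (u p.1 + u p.2.1 + u p.2.2)) +
        1 / (u p.2.1 * (u p.2.1 + u p.1) * u p.2.2 ^ (n + 1) *
          (u p.2.1 + u p.1 + u p.2.2)) :=
    one_div_mul_mul_mul_add_eq_add (hpos _).ne' (hpos _).ne' (add_pos (hpos _) (hpos _)).ne' _ _
  rw [((hsum.add (swapFirst.hasSum_iff.2 hsum)).congr_fun hsplit).tsum_eq,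
    sum_filter_add_add_eq_sum_antidiagonal (nestedSum u),
    sum_Icc_two_eq_sum_antidiagonal (nestedSum u 1), sum_add_distrib]
  ring

end Convergence

section OddNumbers

theorem one_le_two_mul_natCast_add_one (n : ℕ) : 1 ≤ 2 * (n : ℝ) + 1 := by
  simp

theorem summable_two_mul_natCast_add_one_rpow {s : ℝ} (hs : s < -1) :
    Summable fun n : ℕ ↦ (2 * (n : ℝ) + 1) ^ s := by
  have hshift : Summable fun n : ℕ ↦ ((n + 1 : ℕ) : ℝ) ^ s :=
    (summable_nat_add_iff 1).2 (Real.summable_nat_rpow.2 hs)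
  refine hshift.of_nonneg_of_le (fun n ↦ by positivity) fun n ↦ ?_
  refine Real.rpow_le_rpow_of_nonpos (by positivity) ?_ (by linarith)
  push_cast
  linarith [n.cast_nonneg (α := ℝ)]

theorem summable_one_div_mul_mul_mul_add_odd :
    Summable fun p : ℕ × ℕ × ℕ ↦
      1 / ((2 * (p.1 : ℝ) + 1) * (2 * (p.2.1 : ℝ) + 1) * (2 * (p.2.2 : ℝ) + 1) *
        ((2 * (p.1 : ℝ) + 1) + (2 * (p.2.1 : ℝ) + 1) + (2 * (p.2.2 : ℝ) + 1))) :=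
  summable_one_div_mul_mul_mul_add_of_rpow (u := fun n : ℕ ↦ 2 * (n : ℝ) + 1)
    (fun n ↦ zero_lt_one.trans_le (one_le_two_mul_natCast_add_one n))
    (summable_two_mul_natCast_add_one_rpow (by norm_num))

/-- The summation range of a multiple T-value of depth three, parametrised by its gaps: the
successive differences `m₁, m₂ - m₁, m₃ - m₂` are arbitrary odd numbers
`2 * l + 1, 2 * m + 1, 2 * n + 1`. -/
def oddGapsEquiv :
    ℕ × ℕ × ℕ ≃ {f : Fin 3 → ℕ // StrictMono f ∧ ∀ i, f i % 2 = ((i : ℕ) + 1) % 2} where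
  toFun p := ⟨![2 * p.1 + 1, 2 * p.1 + 2 * p.2.1 + 2, 2 * p.1 + 2 * p.2.1 + 2 * p.2.2 + 3], by
    constructor
    · rw [Fin.strictMono_iff_lt_succ]
      intro i
      fin_cases i <;> simp
    · intro i
      fin_cases i <;> simp <;> lia⟩
  invFun f := ((f.1 0 - 1) / 2, (f.1 1 - f.1 0 - 1) / 2, (f.1 2 - f.1 1 - 1) / 2)
  left_inv p := by
    ext <;> simp <;> lia
  right_inv := by
    rintro ⟨f, hmono, hparity⟩
    have h01 : f 0 < f 1 := hmono (by decide)
    have h12 : f 1 < f 2 := hmono (by decide)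
    have h0 := hparity 0
    have h1 := hparity 1
    have h2 := hparity 2
    ext i
    fin_cases i <;> simp at * <;> lia

theorem MTV_eq_eight_mul_nestedSum (a b c : ℕ) :
    MTV [a, b, c] = 8 * nestedSum (fun n : ℕ ↦ 2 * (n : ℝ) + 1) a b c := by
  have hlength : MTV [a, b, c] = 2 ^ 3 *
      ∑' f : {f : Fin 3 → ℕ // StrictMono f ∧ ∀ i, f i % 2 = ((i : ℕ) + 1) % 2},
        ∏ i : Fin 3, (1 : ℝ) / (f.1 i : ℝ) ^ [a, b, c].get i := rfl
  rw [hlength, ← oddGapsEquiv.tsum_eq, nestedSum]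
  norm_num only
  congr 1
  refine tsum_congr fun p ↦ ?_
  have h0 : ((oddGapsEquiv p).1 0 : ℝ) = 2 * p.1 + 1 := by simp [oddGapsEquiv]
  have h1 : ((oddGapsEquiv p).1 1 : ℝ) = (2 * p.1 + 1) + (2 * p.2.1 + 1) := by
    simp only [oddGapsEquiv, Equiv.coe_fn_mk, Matrix.cons_val]
    push_cast
    ring
  have h2 : ((oddGapsEquiv p).1 2 : ℝ) = (2 * p.1 + 1) + (2 * p.2.1 + 1) + (2 * p.2.2 + 1) := by
    simp only [oddGapsEquiv, Equiv.coe_fn_mk, Matrix.cons_val]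
    push_cast
    ring
  rw [Fin.prod_univ_three, h0, h1, h2, one_div_mul_one_div, one_div_mul_one_div]
  rfl

end OddNumbers

/-- **Lemma.** For every positive integer `q`,
`∑_{l,m,n≥0} 1/((2l+1)(2m+1)(2n+1)^q (2l+2m+2n+3))
  = (1/4) ∑_{a+b+c=q+3, a,b≥1, c≥2} T(a,b,c)
    + (1/4) ∑_{j=2}^{q+1} T(1, q+2−j, j) + (1/4) T(1,1,q+1)`. -/
theorem triple_sum_I1 (q : ℕ) (hq : 1 ≤ q) :
    (∑' p : ℕ × ℕ × ℕ,
        1 / ((2 * (p.1 : ℝ) + 1) * (2 * (p.2.1 : ℝ) + 1) * (2 * (p.2.2 : ℝ) + 1) ^ q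
          * (2 * (p.1 : ℝ) + 2 * (p.2.1 : ℝ) + 2 * (p.2.2 : ℝ) + 3)))
      = 1 / 4 * (∑ p ∈ (Finset.Icc 1 (q + 3) ×ˢ Finset.Icc 1 (q + 3) ×ˢ
            Finset.Icc 2 (q + 3)).filter (fun p => p.1 + p.2.1 + p.2.2 = q + 3),
            MTV [p.1, p.2.1, p.2.2])
        + 1 / 4 * (∑ j ∈ Finset.Icc 2 (q + 1), MTV [1, q + 2 - j, j])
        + 1 / 4 * MTV [1, 1, q + 1] := by
  have hgaps (l m n : ℕ) : 2 * (l : ℝ) + 2 * (m : ℝ) + 2 * (n : ℝ) + 3 =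
      (2 * (l : ℝ) + 1) + (2 * (m : ℝ) + 1) + (2 * (n : ℝ) + 1) := by ring
  simp only [hgaps, MTV_eq_eight_mul_nestedSum, ← mul_sum]
  linear_combination triple_sum_I1_general one_le_two_mul_natCast_add_one
    summable_one_div_mul_mul_mul_add_odd hq
end
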